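/- arXiv:2004.12712 — 3 statements merged into one kernel-verified Lean document; each statement's English description precedes it below -/
import Mathlib

section
/- Let 1 < q < ∞ and let w be a weight on ℝⁿ with w ∈ A_q(ℝⁿ). Then there exists σ with 0 < σ < q − 1 such that w ∈ A_{q−σ}(ℝⁿ). -/
/-! The statement follows from the reverse Hölder inequality for the dual weight
`V = w ^ (-1/(q-1))`: if `⨍_Q V ^ (1+ε) ≤ K (⨍_Q V) ^ (1+ε)` on every cube `Q`, with `ε` and `K`
independent of `Q`, put `s = (q-1)/(1+ε)` and `σ = q - 1 - s`. Then `w ^ (-1/s) = V ^ (1+ε)`, so the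
second factor of the `A_{q-σ}` quantity is at most `K ^ s` times the second factor of the `A_q`
quantity (final theorem).

The reverse Hölder inequality comes from an `A_∞` condition: there is `β < 1` such that
`V(E) ≤ β V(Q)` whenever `E ⊆ Q` satisfies `|E| ≤ |Q|/2`. This is Hölder's inequality
`|F| ^ q ≤ w(F) V(F) ^ (q-1)` for `F = Q \ E` combined with the `A_q` bound (`aInfty_of_aq`).

Given the `A_∞` condition, let `Ω_t ⊆ Q` be the set where the dyadic maximal function of `V` on `Q`
exceeds `t`. For `t ≥ ⨍_Q V`, the maximal dyadic cubes `P` of density `> t` have density at most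
`2 ^ n t`, so by the weak type `(1,1)` bound inside `P` the set `Ω_{2·2ⁿ t}` fills at most half of
each `P`, whence `V(Ω_{2·2ⁿ t}) ≤ β V(Ω_t)` (`NestedCells.measure_stopSet_le`). Thus the mass of
`Ω_t` decays geometrically along the levels `t = (2·2ⁿ) ^ k ⨍_Q V`, while `V ≤ t` almost everywhere
off `Ω_t` by Lebesgue differentiation. Summing over `k` bounds `∫_Q V ^ (1+ε)` by a geometric series
that converges as soon as `(2·2ⁿ) ^ ε β < 1` (`NestedCells.reverse_holder`).

The stopping-time part is carried out for an abstract nested sequence of countable partitions. The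
concrete cubes live in `Fin n → ℝ` with the sup norm, where cubes are closed balls. -/

open MeasureTheory Metric Set ENNReal

/-- The axis-parallel cube with center `c` and half edge-length `r`. -/
def axisCube {n : ℕ} (c : EuclideanSpace ℝ (Fin n)) (r : ℝ) :
    Set (EuclideanSpace ℝ (Fin n)) :=
  {x | ∀ i, |x i - c i| ≤ r}

/-- The Muckenhoupt class `A_q(ℝⁿ)`:
`sup_Q (fQ w) (fQ w^{−1/(q−1)})^{q−1} < ∞` over axis-parallel cubes `Q`. -/
def MemAq {n : ℕ} (q : ℝ) (w : EuclideanSpace ℝ (Fin n) → ℝ) : Prop :=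
  ∃ C : ℝ≥0∞, C ≠ ⊤ ∧ ∀ (c : EuclideanSpace ℝ (Fin n)) (r : ℝ), 0 < r →
    ((volume (axisCube c r))⁻¹ * ∫⁻ x in axisCube c r, ENNReal.ofReal (w x)) *
      ((volume (axisCube c r))⁻¹ *
        ∫⁻ x in axisCube c r, ENNReal.ofReal (w x ^ (-(1 / (q - 1))))) ^ (q - 1) ≤ C

/-! ### Stopping times for nested partitions -/

/-- A nested sequence of countable measurable partitions; `cell k x` is the atom of the `k`-th
partition containing `x`. -/
structure NestedCells {X : Type*} [MeasurableSpace X] (cell : ℕ → X → Set X) : Prop where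
  mem : ∀ k x, x ∈ cell k x
  eq_of_mem : ∀ k x y, y ∈ cell k x → cell k y = cell k x
  anti : ∀ k x, cell (k + 1) x ⊆ cell k x
  meas : ∀ k x, MeasurableSet (cell k x)
  countable : {C | ∃ k x, C = cell k x}.Countable

namespace NestedCells

variable {X : Type*} [MeasurableSpace X] {cell : ℕ → X → Set X}

lemma subset_of_le (h : NestedCells cell) {j k : ℕ} (hjk : j ≤ k) (x : X) :
    cell k x ⊆ cell j x := by
  induction k, hjk using Nat.le_induction with
  | base => exact subset_rfl
  | succ k _ ih => exact (h.anti k x).trans ih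

lemma eq_of_mem_le (h : NestedCells cell) {j k : ℕ} (hjk : j ≤ k) {x y : X}
    (hy : y ∈ cell k x) : cell j y = cell j x :=
  h.eq_of_mem j x y (h.subset_of_le hjk x hy)

/-- Summation over stopping cells: if every point of `S` lies in a cell of density exceeding `t`,
then a comparison of `ρ₁` and `ρ₂` on the maximal such cells gives a comparison on all of `S`,
because the maximal cells are countably many and pairwise disjoint. -/
lemma measure_le_of_stopping (h : NestedCells cell) (μ ν ρ₁ ρ₂ : Measure X) (t : ℝ≥0∞)
    (S S' : Set X) (hS : ∀ x ∈ S, ∃ k, t * μ (cell k x) < ν (cell k x))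
    (hloc : ∀ x ∈ S, ∀ k, t * μ (cell k x) < ν (cell k x) →
      (∀ j < k, ν (cell j x) ≤ t * μ (cell j x)) →
      ρ₁ (S ∩ cell k x) ≤ ρ₂ (cell k x) ∧ cell k x ⊆ S') :
    ρ₁ S ≤ ρ₂ S' := by
  classical
  set N : X → ℕ := fun x => sInf {k | t * μ (cell k x) < ν (cell k x)} with hN
  have hN1 : ∀ x ∈ S, t * μ (cell (N x) x) < ν (cell (N x) x) := fun x hx =>
    Nat.sInf_mem (s := {k | t * μ (cell k x) < ν (cell k x)}) (hS x hx)
  have hN2 : ∀ x, ∀ j < N x, ν (cell j x) ≤ t * μ (cell j x) := fun x j hj =>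
    not_lt.1 (Nat.notMem_of_lt_sInf hj)
  have hNeq : ∀ x ∈ S, ∀ y ∈ cell (N x) x, N y = N x := by
    intro x hx y hy
    apply le_antisymm
    · apply Nat.sInf_le
      change t * μ (cell (N x) y) < ν (cell (N x) y)
      rw [h.eq_of_mem _ _ _ hy]
      exact hN1 x hx
    · by_contra! hlt
      have hy' : t * μ (cell (N y) y) < ν (cell (N y) y) := by
        apply Nat.sInf_mem (s := {k | t * μ (cell k y) < ν (cell k y)})
        refine ⟨N x, ?_⟩
        change t * μ (cell (N x) y) < ν (cell (N x) y)
        rw [h.eq_of_mem _ _ _ hy]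
        exact hN1 x hx
      rw [h.eq_of_mem_le hlt.le hy] at hy'
      exact absurd hy' (not_lt.2 (hN2 x _ hlt))
  set P : Set (Set X) := Set.image (fun x => cell (N x) x) S with hP
  have hPc : P.Countable := by
    refine h.countable.mono ?_
    rintro _ ⟨x, -, rfl⟩
    exact ⟨_, _, rfl⟩
  have hPd : P.PairwiseDisjoint id := by
    rintro _ ⟨x, hx, rfl⟩ _ ⟨y, hy, rfl⟩ hne
    rw [Function.onFun, Set.disjoint_left]
    intro z hzx hzy
    apply hne
    have h1 := h.eq_of_mem _ _ _ hzx
    have h2 := h.eq_of_mem _ _ _ hzy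
    rw [← hNeq x hx z hzx] at h1
    rw [← hNeq y hy z hzy] at h2
    simp only
    rw [← hNeq x hx z hzx, ← h1, h2, hNeq y hy z hzy]
  have hcov : S ⊆ ⋃ C ∈ P, S ∩ C := by
    intro x hx
    simp only [mem_iUnion]
    exact ⟨_, ⟨x, hx, rfl⟩, hx, h.mem _ _⟩
  calc ρ₁ S ≤ ρ₁ (⋃ C ∈ P, S ∩ C) := measure_mono hcov
    _ ≤ ∑' C : P, ρ₁ (S ∩ C) := measure_biUnion_le _ hPc _
    _ ≤ ∑' C : P, ρ₂ C := by
        refine ENNReal.tsum_le_tsum ?_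
        rintro ⟨_, x, hx, rfl⟩
        exact (hloc x hx _ (hN1 x hx) (hN2 x)).1
    _ = ρ₂ (⋃ C ∈ P, C) := by
        refine (measure_biUnion (f := id) hPc hPd ?_).symm
        rintro _ ⟨x, hx, rfl⟩
        exact h.meas _ _
    _ ≤ ρ₂ S' := by
        refine measure_mono (iUnion₂_subset ?_)
        rintro _ ⟨x, hx, rfl⟩
        exact (hloc x hx _ (hN1 x hx) (hN2 x)).2

end NestedCells

/-- The superlevel set in `Q` of the dyadic maximal function of the density `dν/dμ`. -/
def stopSet {X : Type*} [MeasurableSpace X] (cell : ℕ → X → Set X) (μ ν : Measure X) (Q : Set X)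
    (t : ℝ≥0∞) : Set X :=
  {x | x ∈ Q ∧ ∃ k, t * μ (cell k x) < ν (cell k x)}

namespace NestedCells

variable {X : Type*} [MeasurableSpace X] {cell : ℕ → X → Set X}

lemma measurableSet_stopSet (h : NestedCells cell) (μ ν : Measure X) {Q : Set X}
    (hQ : MeasurableSet Q) (t : ℝ≥0∞) : MeasurableSet (stopSet cell μ ν Q t) := by
  have : stopSet cell μ ν Q t
      = Q ∩ ⋃₀ {C | (∃ k x, C = cell k x) ∧ t * μ C < ν C} := by
    ext x
    constructor
    · rintro ⟨hx, k, hk⟩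
      exact ⟨hx, cell k x, ⟨⟨k, x, rfl⟩, hk⟩, h.mem k x⟩
    · rintro ⟨hx, _, ⟨⟨k, y, rfl⟩, hk⟩, hxy⟩
      refine ⟨hx, k, ?_⟩
      rwa [h.eq_of_mem _ _ _ hxy]
  rw [this]
  refine hQ.inter (MeasurableSet.sUnion (h.countable.mono fun C hC => hC.1) ?_)
  rintro _ ⟨⟨k, x, rfl⟩, -⟩
  exact h.meas k x

/-- One step of the Calderón–Zygmund iteration: raising the level by the factor `2 D` shrinks the
`ν`-mass of the superlevel set of the dyadic maximal function by the factor `β`. -/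
lemma measure_stopSet_le (h : NestedCells cell) (μ ν : Measure X) {Q : Set X}
    (hQm : MeasurableSet Q) (hQ : ∀ x ∈ Q, cell 0 x = Q) {D β t : ℝ≥0∞}
    (hD : 1 ≤ D) (hD' : D ≠ ⊤) (ht : t ≠ 0) (ht' : t ≠ ⊤)
    (hdoub : ∀ k, ∀ x ∈ Q, μ (cell k x) ≤ D * μ (cell (k + 1) x))
    (hA : ∀ k, ∀ x ∈ Q, ∀ E, MeasurableSet E → 2 * μ (E ∩ cell k x) ≤ μ (cell k x) →
      ν (E ∩ cell k x) ≤ β * ν (cell k x))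
    (hQt : ν Q ≤ t * μ Q) :
    ν (stopSet cell μ ν Q (2 * D * t)) ≤ β * ν (stopSet cell μ ν Q t) := by
  have h2 : t ≤ 2 * D * t := by
    refine le_mul_of_one_le_left zero_le ?_
    calc (1 : ℝ≥0∞) = 1 * 1 := by simp
      _ ≤ 2 * D := by gcongr; exact one_le_two
  have key := h.measure_le_of_stopping μ ν ν (β • ν) t (stopSet cell μ ν Q (2 * D * t))
    (stopSet cell μ ν Q t) ?_ ?_
  · simpa using key
  · rintro x ⟨hx, k, hk⟩
    exact ⟨k, lt_of_le_of_lt (by gcongr) hk⟩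
  · rintro x ⟨hx, -⟩ k hk hmin
    constructor
    swap
    · intro y hy
      refine ⟨?_, k, ?_⟩
      · rw [← hQ x hx]
        exact h.subset_of_le (Nat.zero_le k) x hy
      · rwa [h.eq_of_mem _ _ _ hy]
    · -- the first stopping time is positive, so the parent cell has density at most `t`
      obtain _ | j := k
      · rw [hQ x hx] at hk
        exact absurd hQt (not_le.2 hk)
      have hpar : ν (cell (j + 1) x) ≤ D * t * μ (cell (j + 1) x) :=
        calc ν (cell (j + 1) x) ≤ ν (cell j x) := measure_mono (h.anti j x)
          _ ≤ t * μ (cell j x) := hmin j (Nat.lt_succ_self j)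
          _ ≤ t * (D * μ (cell (j + 1) x)) := by gcongr; exact hdoub j x hx
          _ = _ := by ring
      -- weak type (1,1) bound for the dyadic maximal function inside the stopping cell
      have hweak := h.measure_le_of_stopping μ ν ((2 * D * t) • μ) ν (2 * D * t)
        (stopSet cell μ ν Q (2 * D * t) ∩ cell (j + 1) x) (cell (j + 1) x) ?_ ?_
      · rw [Measure.smul_apply, smul_eq_mul] at hweak
        rw [Measure.smul_apply, smul_eq_mul]
        refine hA (j + 1) x hx _ (h.measurableSet_stopSet μ ν hQm _) ?_
        have hDt0 : D * t ≠ 0 := mul_ne_zero (one_pos.trans_le hD).ne' ht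
        have hDt : D * t ≠ ⊤ := ENNReal.mul_ne_top hD' ht'
        rw [← ENNReal.mul_le_mul_iff_right hDt0 hDt]
        refine le_trans (le_of_eq ?_) (hweak.trans hpar)
        ring
      · rintro y ⟨⟨_, hy⟩, -⟩
        exact hy
      · rintro y ⟨_, hyx⟩ i hi -
        have hle : j + 1 ≤ i := by
          by_contra! hlt
          rw [h.eq_of_mem_le hlt.le hyx] at hi
          exact absurd (lt_of_le_of_lt (by gcongr) hi) (not_lt.2 (hmin i hlt))
        have hsub : cell i y ⊆ cell (j + 1) x := by
          rw [← h.eq_of_mem _ _ _ hyx]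
          exact h.subset_of_le hle y
        refine ⟨?_, hsub⟩
        rw [Measure.smul_apply, smul_eq_mul]
        exact le_trans (by gcongr; exact inter_subset_right) hi.le

/-- Reverse Hölder inequality on a single top cell, with an explicit constant depending only on the
doubling constant `D`, the constant `β` of the `A_∞` condition `hA`, and the exponent `ε`. -/
lemma reverse_holder (h : NestedCells cell) (μ : Measure X) {f : X → ℝ≥0∞} (hf : Measurable f)
    {Q : Set X} (hQm : MeasurableSet Q) (hQ : ∀ x ∈ Q, cell 0 x = Q) {D β : ℝ≥0∞}
    (hD : 1 ≤ D) (hD' : D ≠ ⊤) (hμ0 : μ Q ≠ 0) (hμ : μ Q ≠ ⊤)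
    (hν : μ.withDensity f Q ≠ ⊤)
    (hdoub : ∀ k, ∀ x ∈ Q, μ (cell k x) ≤ D * μ (cell (k + 1) x))
    (hA : ∀ k, ∀ x ∈ Q, ∀ E, MeasurableSet E → 2 * μ (E ∩ cell k x) ≤ μ (cell k x) →
      μ.withDensity f (E ∩ cell k x) ≤ β * μ.withDensity f (cell k x))
    (hdiff : ∀ᵐ x ∂μ, x ∈ Q → ∀ t, (∀ k, μ.withDensity f (cell k x) ≤ t * μ (cell k x)) →
      f x ≤ t) {ε : ℝ} (hε : 0 < ε) :
    ∫⁻ x in Q, f x ^ (1 + ε) ∂μ ≤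
      (1 + (2 * D) ^ ε * (1 - (2 * D) ^ ε * β)⁻¹) *
        ((μ.withDensity f Q / μ Q) ^ ε * μ.withDensity f Q) := by
  set ν := μ.withDensity f with hνdef
  set a := ν Q / μ Q with ha
  set L := 2 * D with hL
  have hL1 : 1 ≤ L := by
    calc (1 : ℝ≥0∞) = 1 * 1 := by simp
      _ ≤ 2 * D := by gcongr; exact one_le_two
  have hL0 : L ≠ 0 := (one_pos.trans_le hL1).ne'
  have hLt : L ≠ ⊤ := ENNReal.mul_ne_top (by simp) hD'
  have haQ : a * μ Q = ν Q := ENNReal.div_mul_cancel hμ0 hμ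
  have hat : a ≠ ⊤ := ENNReal.div_ne_top hν hμ0
  have hint : ∫⁻ x in Q, f x ^ (1 + ε) ∂μ = ∫⁻ x in Q, f x ^ ε ∂ν := by
    rw [hνdef, restrict_withDensity hQm, lintegral_withDensity_eq_lintegral_mul _ hf (by fun_prop)]
    refine lintegral_congr fun x => ?_
    rw [ENNReal.rpow_add_of_nonneg _ _ zero_le_one hε.le, ENNReal.rpow_one]
    rfl
  rw [hint]
  by_cases hν0 : ν Q = 0
  · rw [Measure.restrict_eq_zero.2 hν0]
    simp
  have ha0 : a ≠ 0 := fun h0 => hν0 (by rw [← haQ, h0, zero_mul])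
  set Ω : ℕ → Set X := fun k => stopSet cell μ ν Q (L ^ k * a) with hΩ
  have hΩQ : ∀ k, Ω k ⊆ Q := fun k x hx => hx.1
  have hΩm : ∀ k, MeasurableSet (Ω k) := fun k => h.measurableSet_stopSet μ ν hQm _
  have hdecay : ∀ k, ν (Ω k) ≤ β ^ k * ν Q := by
    intro k
    induction k with
    | zero => simpa using measure_mono (hΩQ 0)
    | succ k ih =>
      have hstep := h.measure_stopSet_le μ ν hQm hQ (t := L ^ k * a) hD hD'
        (mul_ne_zero (pow_ne_zero _ hL0) ha0) (ENNReal.mul_ne_top (ENNReal.pow_ne_top hLt) hat)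
        hdoub hA (by
          rw [← haQ]
          gcongr
          exact le_mul_of_one_le_left zero_le (one_le_pow₀ hL1))
      have : Ω (k + 1) = stopSet cell μ ν Q (2 * D * (L ^ k * a)) := by
        simp only [hΩ]
        rw [pow_succ', mul_assoc]
      rw [this]
      calc _ ≤ β * ν (Ω k) := hstep
        _ ≤ β * (β ^ k * ν Q) := by gcongr
        _ = _ := by rw [pow_succ', mul_assoc]
  have hpt : ∀ᵐ x ∂(ν.restrict Q),
      f x ^ ε ≤ a ^ ε + ∑' k, (Ω k).indicator (fun _ => (L ^ (k + 1) * a) ^ ε) x := by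
    rw [ae_restrict_iff' hQm]
    refine (withDensity_absolutelyContinuous μ f).ae_le ?_
    filter_upwards [hdiff] with x hx hxQ
    have hout : ∀ k, x ∉ Ω k → f x ≤ L ^ k * a := by
      intro k hk
      refine hx hxQ _ fun j => ?_
      by_contra! hj
      exact hk ⟨hxQ, j, hj⟩
    by_cases hall : ∀ k, x ∈ Ω k
    · -- every term of the series is at least `a ^ ε > 0`, so the right-hand side is infinite
      have htop : ∑' k, (Ω k).indicator (fun _ => (L ^ (k + 1) * a) ^ ε) x = ⊤ := by
        rw [eq_top_iff]
        calc (⊤ : ℝ≥0∞) = ∑' _ : ℕ, a ^ ε :=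
              (ENNReal.tsum_const_eq_top_of_ne_zero
                (ENNReal.rpow_pos (pos_iff_ne_zero.2 ha0) hat).ne').symm
          _ ≤ _ := by
              refine ENNReal.tsum_le_tsum fun k => ?_
              rw [indicator_of_mem (hall k)]
              gcongr
              exact le_mul_of_one_le_left zero_le (one_le_pow₀ hL1)
      rw [htop]
      simp
    · push Not at hall
      classical
      obtain ⟨k, hk, hmin⟩ : ∃ k, x ∉ Ω k ∧ ∀ j < k, x ∈ Ω j :=
        ⟨Nat.find hall, Nat.find_spec hall, fun j hj => not_not.1 (Nat.find_min hall hj)⟩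
      obtain _ | j := k
      · refine le_trans ?_ le_self_add
        gcongr
        simpa using hout 0 hk
      · refine le_trans ?_ le_add_self
        refine le_trans ?_ (ENNReal.le_tsum j)
        rw [indicator_of_mem (hmin j (Nat.lt_succ_self j))]
        gcongr
        exact hout _ hk
  calc ∫⁻ x in Q, f x ^ ε ∂ν
      ≤ ∫⁻ x in Q, (a ^ ε + ∑' k, (Ω k).indicator (fun _ => (L ^ (k + 1) * a) ^ ε) x) ∂ν :=
        lintegral_mono_ae hpt
    _ = a ^ ε * ν Q + ∑' k, (L ^ (k + 1) * a) ^ ε * ν (Ω k) := by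
        rw [lintegral_add_left measurable_const, lintegral_tsum]
        · congr 1
          · simp
          · refine tsum_congr fun k => ?_
            rw [lintegral_indicator_const (hΩm k), Measure.restrict_apply (hΩm k),
              inter_eq_left.2 (hΩQ k)]
        · exact fun k => (measurable_const.indicator (hΩm k)).aemeasurable
    _ ≤ a ^ ε * ν Q + ∑' k, L ^ ε * (a ^ ε * ν Q) * (L ^ ε * β) ^ k := by
        refine add_le_add le_rfl (ENNReal.tsum_le_tsum fun k => ?_)
        calc (L ^ (k + 1) * a) ^ ε * ν (Ω k)
            ≤ (L ^ (k + 1) * a) ^ ε * (β ^ k * ν Q) := by gcongr; exact hdecay k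
          _ = _ := by
            rw [ENNReal.mul_rpow_of_nonneg _ _ hε.le, ← ENNReal.rpow_natCast L,
              ← ENNReal.rpow_mul, mul_comm ((k + 1 : ℕ) : ℝ) ε, ENNReal.rpow_mul,
              ENNReal.rpow_natCast, mul_pow, pow_succ]
            ring
    _ = _ := by
        rw [ENNReal.tsum_mul_left, ENNReal.tsum_geometric]
        ring

end NestedCells

/-! ### Dyadic subcubes of a cube -/

/-- The half-open dyadic subcubes of the cube with center `c` and half edge-length `r`:
`dyadicCell c r k x` is the cube of generation `k` containing `x`. The definition makes sense for
all `x`, giving a dyadic grid of the whole space. -/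
def dyadicCell {n : ℕ} (c : Fin n → ℝ) (r : ℝ) (k : ℕ) (x : Fin n → ℝ) : Set (Fin n → ℝ) :=
  {y | ∀ i, ⌊2 ^ k * ((y i - (c i - r)) / (2 * r))⌋ = ⌊2 ^ k * ((x i - (c i - r)) / (2 * r))⌋}

/-- The center of `dyadicCell c r k x`. -/
noncomputable def dyadicCenter {n : ℕ} (c : Fin n → ℝ) (r : ℝ) (k : ℕ) (x : Fin n → ℝ) :
    Fin n → ℝ :=
  fun i => c i - r + (2 * ⌊2 ^ k * ((x i - (c i - r)) / (2 * r))⌋ + 1) * (r / 2 ^ k)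

lemma nestedCells_dyadicCell {n : ℕ} (c : Fin n → ℝ) (r : ℝ) : NestedCells (dyadicCell c r) where
  mem _ _ _ := rfl
  eq_of_mem k x y hy := by
    ext z
    simp only [dyadicCell, mem_ofPred_eq] at hy ⊢
    simp only [hy]
  anti k x y hy i := by
    have key : ∀ z : ℝ, ⌊2 ^ k * z⌋ = ⌊2 ^ (k + 1) * z⌋ / 2 := by
      intro z
      have := Int.floor_div_natCast (2 ^ (k + 1) * z) 2
      rw [← Nat.cast_two (R := ℤ), ← this]
      congr 1
      push_cast
      ring
    rw [key, key, hy i]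
  meas k x := by
    have : dyadicCell c r k x = ⋂ i, (fun y : Fin n → ℝ =>
        ⌊2 ^ k * ((y i - (c i - r)) / (2 * r))⌋) ⁻¹'
          {⌊2 ^ k * ((x i - (c i - r)) / (2 * r))⌋} := by
      ext y; simp [dyadicCell]
    rw [this]
    refine MeasurableSet.iInter fun i => ?_
    refine (Measurable.floor ?_) (measurableSet_singleton _)
    fun_prop
  countable := by
    refine (countable_range (fun p : ℕ × (Fin n → ℤ) =>
      {y : Fin n → ℝ | ∀ i, ⌊2 ^ p.1 * ((y i - (c i - r)) / (2 * r))⌋ = p.2 i})).mono ?_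
    rintro _ ⟨k, x, rfl⟩
    exact ⟨(k, fun i => ⌊2 ^ k * ((x i - (c i - r)) / (2 * r))⌋), rfl⟩

lemma dyadicCell_eq_pi {n : ℕ} (c : Fin n → ℝ) {r : ℝ} (hr : 0 < r) (k : ℕ) (x : Fin n → ℝ) :
    dyadicCell c r k x = univ.pi fun i =>
      Ico (dyadicCenter c r k x i - r / 2 ^ k) (dyadicCenter c r k x i + r / 2 ^ k) := by
  ext y
  simp only [dyadicCell, mem_ofPred_eq, mem_pi, mem_univ, true_imp_iff, mem_Ico]
  refine forall_congr' fun i => ?_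
  have hk : (0 : ℝ) < 2 ^ k := by positivity
  rw [Int.floor_eq_iff]
  simp only [dyadicCenter]
  generalize (⌊2 ^ k * ((x i - (c i - r)) / (2 * r))⌋ : ℝ) = m
  have hy : y i = c i - r + 2 * (2 ^ k * ((y i - (c i - r)) / (2 * r))) * (r / 2 ^ k) := by
    field_simp
    ring
  generalize 2 ^ k * ((y i - (c i - r)) / (2 * r)) = z at hy ⊢
  have hs : 0 < r / 2 ^ k := by positivity
  generalize r / 2 ^ k = s at hy hs
  rw [hy]
  constructor
  · rintro ⟨h1, h2⟩
    constructor <;> nlinarith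
  · rintro ⟨h1, h2⟩
    constructor
    · by_contra! h
      nlinarith
    · by_contra! h
      nlinarith

lemma closedBall_pi_eq_Icc {n : ℕ} (c : Fin n → ℝ) {r : ℝ} (hr : 0 < r) :
    closedBall c r = Icc (fun i => c i - r) (fun i => c i + r) := by
  rw [closedBall_pi _ hr.le, ← pi_univ_Icc]
  simp only [Real.closedBall_eq_Icc]

lemma dyadicCell_ae_eq {n : ℕ} (c : Fin n → ℝ) {r : ℝ} (hr : 0 < r) (k : ℕ) (x : Fin n → ℝ) :
    dyadicCell c r k x =ᵐ[volume] closedBall (dyadicCenter c r k x) (r / 2 ^ k) := by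
  rw [dyadicCell_eq_pi c hr, closedBall_pi_eq_Icc _ (by positivity)]
  exact Measure.univ_pi_Ico_ae_eq_Icc

lemma dyadicCell_subset {n : ℕ} (c : Fin n → ℝ) {r : ℝ} (hr : 0 < r) (k : ℕ) (x : Fin n → ℝ) :
    dyadicCell c r k x ⊆ closedBall (dyadicCenter c r k x) (r / 2 ^ k) := by
  rw [dyadicCell_eq_pi c hr, closedBall_pi_eq_Icc _ (by positivity), ← pi_univ_Icc]
  exact pi_mono fun i _ => Ico_subset_Icc_self

lemma dyadicCenter_zero_self {n : ℕ} (c : Fin n → ℝ) {r : ℝ} (hr : 0 < r) :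
    dyadicCenter c r 0 c = c := by
  ext i
  have : (2 : ℝ) ^ 0 * ((c i - (c i - r)) / (2 * r)) = 1 / 2 := by
    field_simp
    ring
  simp only [dyadicCenter, this]
  norm_num

lemma dyadicCell_zero_ae_eq {n : ℕ} (c : Fin n → ℝ) {r : ℝ} (hr : 0 < r) :
    dyadicCell c r 0 c =ᵐ[volume] closedBall c r := by
  simpa [dyadicCenter_zero_self c hr] using dyadicCell_ae_eq c hr 0 c

lemma volume_dyadicCell {n : ℕ} (c : Fin n → ℝ) {r : ℝ} (hr : 0 < r) (k : ℕ) (x : Fin n → ℝ) :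
    volume (dyadicCell c r k x) = ENNReal.ofReal ((2 * (r / 2 ^ k)) ^ n) := by
  rw [measure_congr (dyadicCell_ae_eq c hr k x), Real.volume_pi_closedBall _ (by positivity)]
  simp

lemma volume_dyadicCell_eq_mul {n : ℕ} (c : Fin n → ℝ) {r : ℝ} (hr : 0 < r) (k : ℕ)
    (x : Fin n → ℝ) :
    volume (dyadicCell c r k x) = 2 ^ n * volume (dyadicCell c r (k + 1) x) := by
  rw [volume_dyadicCell c hr, volume_dyadicCell c hr]
  have : (2 : ℝ≥0∞) ^ n = ENNReal.ofReal (2 ^ n) := by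
    rw [ENNReal.ofReal_pow (by norm_num)]; simp
  rw [this, ← ENNReal.ofReal_mul (by positivity), ← mul_pow]
  congr 2
  rw [pow_succ]
  field_simp

lemma setLIntegral_congr_inter {X : Type*} [MeasurableSpace X] {μ : Measure X} (f : X → ℝ≥0∞)
    {Q C : Set X} (hC : MeasurableSet C) (hCQ : C ⊆ Q) :
    ∫⁻ y in C, Q.indicator f y ∂μ = ∫⁻ y in C, f y ∂μ :=
  setLIntegral_congr_fun hC fun _ hy => indicator_of_mem (hCQ hy) f

/-- Lebesgue differentiation along the dyadic cubes of a fixed cube `Q`; the cubes are closed balls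
of the sup norm up to null sets, and only `f` restricted to `Q` matters. -/
lemma ae_le_of_dyadic_averages_le {n : ℕ} (c : Fin n → ℝ) {r : ℝ} (hr : 0 < r)
    {f : (Fin n → ℝ) → ℝ≥0∞} (hf : Measurable f)
    (hfin : ∫⁻ x in dyadicCell c r 0 c, f x ≠ ⊤) :
    ∀ᵐ x ∂volume, x ∈ dyadicCell c r 0 c → ∀ t,
      (∀ k, volume.withDensity f (dyadicCell c r k x) ≤ t * volume (dyadicCell c r k x)) →
      f x ≤ t := by
  have hN := nestedCells_dyadicCell c r
  set Q := dyadicCell c r 0 c with hQ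
  have hQm : MeasurableSet Q := hN.meas 0 c
  have hg : Measurable (Q.indicator f) := hf.indicator hQm
  have hgfin : ∫⁻ x, Q.indicator f x ≠ ⊤ := by rwa [lintegral_indicator hQm]
  filter_upwards [(IsUnifLocDoublingMeasure.vitaliFamily
    (volume : Measure (Fin n → ℝ)) 1).ae_tendsto_lintegral_div hg.aemeasurable hgfin]
    with x hx hxQ t ht
  rw [indicator_of_mem hxQ] at hx
  have hδ : Filter.Tendsto (fun k : ℕ => r / 2 ^ k) Filter.atTop (nhdsWithin 0 (Ioi 0)) := by
    rw [tendsto_nhdsWithin_iff]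
    refine ⟨?_, Filter.Eventually.of_forall fun k => by simp; positivity⟩
    have := (tendsto_pow_atTop_nhds_zero_of_lt_one (r := (1 / 2 : ℝ)) (by norm_num)
      (by norm_num)).const_mul r
    simpa [div_eq_mul_inv] using this
  have hlim := hx.comp (IsUnifLocDoublingMeasure.tendsto_closedBall_filterAt volume
    (K := 1) (x := x) (fun k => dyadicCenter c r k x) (fun k => r / 2 ^ k) hδ
    (Filter.Eventually.of_forall fun k => by
      rw [one_mul]; exact dyadicCell_subset c hr k x (hN.mem k x)))
  refine le_of_tendsto hlim (Filter.Eventually.of_forall fun k => ?_)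
  have hsub : dyadicCell c r k x ⊆ Q := by
    rw [hQ, ← hN.eq_of_mem 0 c x hxQ]
    exact hN.subset_of_le (Nat.zero_le k) x
  simp only [Function.comp]
  rw [← setLIntegral_congr (dyadicCell_ae_eq c hr k x),
    ← measure_congr (dyadicCell_ae_eq c hr k x),
    setLIntegral_congr_inter f (hN.meas k x) hsub]
  refine ENNReal.div_le_of_le_mul ?_
  rw [← withDensity_apply f (hN.meas k x)]
  exact ht k

/-- Reverse Hölder inequality on cubes under a quantitative `A_∞` condition. -/
lemma reverse_holder_closedBall {n : ℕ} {f : (Fin n → ℝ) → ℝ≥0∞} (hf : Measurable f) {β : ℝ≥0∞}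
    (hfin : ∀ c r, 0 < r → ∫⁻ x in closedBall c r, f x ≠ ⊤)
    (hA : ∀ c r, 0 < r → ∀ E, MeasurableSet E →
      2 * volume (E ∩ closedBall c r) ≤ volume (closedBall c r) →
      volume.withDensity f (E ∩ closedBall c r) ≤ β * volume.withDensity f (closedBall c r))
    {ε : ℝ} (hε : 0 < ε) (c : Fin n → ℝ) (r : ℝ) (hr : 0 < r) :
    ∫⁻ x in closedBall c r, f x ^ (1 + ε) ≤
      (1 + (2 * 2 ^ n) ^ ε * (1 - (2 * 2 ^ n) ^ ε * β)⁻¹) *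
        (((∫⁻ x in closedBall c r, f x) / volume (closedBall c r)) ^ ε *
          ∫⁻ x in closedBall c r, f x) := by
  have hN := nestedCells_dyadicCell c r
  have hac := withDensity_absolutelyContinuous (volume : Measure (Fin n → ℝ)) f
  have hQball := dyadicCell_zero_ae_eq c hr
  have hfinQ : ∫⁻ x in dyadicCell c r 0 c, f x ≠ ⊤ := by
    rw [setLIntegral_congr hQball]
    exact hfin c r hr
  have main := hN.reverse_holder volume hf (Q := dyadicCell c r 0 c) (D := 2 ^ n) (β := β)
    (hN.meas 0 c) (fun x hx => hN.eq_of_mem 0 c x hx)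
    (one_le_pow₀ one_le_two) (ENNReal.pow_ne_top (by simp))
    (by rw [volume_dyadicCell c hr]; simp; positivity)
    (by rw [volume_dyadicCell c hr]; simp)
    (by rwa [withDensity_apply f (hN.meas 0 c)])
    (fun k x _ => (volume_dyadicCell_eq_mul c hr k x).le)
    (by
      intro k x _ E hE h2
      have h1 := dyadicCell_ae_eq c hr k x
      have h3 : (E ∩ dyadicCell c r k x : Set (Fin n → ℝ)) =ᵐ[volume]
          (E ∩ closedBall (dyadicCenter c r k x) (r / 2 ^ k) : Set (Fin n → ℝ)) :=
        ae_eq_set_inter Filter.EventuallyEq.rfl h1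
      rw [measure_congr h1, measure_congr h3] at h2
      rw [measure_congr (hac.ae_eq h1), measure_congr (hac.ae_eq h3)]
      exact hA _ _ (by positivity) E hE h2)
    (ae_le_of_dyadic_averages_le c hr hf hfinQ) hε
  rwa [withDensity_apply f (hN.meas 0 c), setLIntegral_congr hQball, setLIntegral_congr hQball,
    measure_congr hQball] at main

/-! ### From `A_q` to a quantitative `A_∞` condition -/

/-- Hölder's inequality applied to `1 = W ^ (1/q) * W ^ (-1/q)`: a lower bound for the mass of the
dual weight on an arbitrary set in terms of its measure. -/
lemma measure_rpow_le {X : Type*} [MeasurableSpace X] {μ : Measure X} {W : X → ℝ≥0∞}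
    (hW : Measurable W) (hpos : ∀ᵐ x ∂μ, 0 < W x ∧ W x ≠ ⊤) {q : ℝ} (hq : 1 < q) (F : Set X) :
    μ F ^ q ≤ (∫⁻ x in F, W x ∂μ) * (∫⁻ x in F, W x ^ (-(1 / (q - 1))) ∂μ) ^ (q - 1) := by
  have hq0 : 0 < q := by linarith
  have hq1 : 0 < q - 1 := by linarith
  have hH := ENNReal.lintegral_mul_le_Lp_mul_Lq (μ.restrict F)
    (Real.HolderConjugate.conjExponent hq) (hW.pow_const (1 / q)).aemeasurable
    (hW.pow_const (-(1 / q))).aemeasurable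
  have h1 : ∫⁻ x in F, ((fun x => W x ^ (1 / q)) * fun x => W x ^ (-(1 / q))) x ∂μ = μ F := by
    rw [← setLIntegral_one]
    refine lintegral_congr_ae (ae_restrict_of_ae ?_)
    filter_upwards [hpos] with x hx
    simp only [Pi.mul_apply]
    rw [← ENNReal.rpow_add _ _ hx.1.ne' hx.2, add_neg_cancel, ENNReal.rpow_zero]
  have h2 : ∀ x, (W x ^ (1 / q)) ^ q = W x := fun x => by
    rw [← ENNReal.rpow_mul, one_div_mul_cancel hq0.ne', ENNReal.rpow_one]
  have h3 : ∀ x, (W x ^ (-(1 / q))) ^ q.conjExponent = W x ^ (-(1 / (q - 1))) := fun x => by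
    rw [← ENNReal.rpow_mul]
    congr 1
    rw [Real.conjExponent]
    field_simp
  rw [h1] at hH
  simp only [h2, h3] at hH
  calc μ F ^ q ≤ _ := ENNReal.rpow_le_rpow hH hq0.le
    _ = _ := by
      rw [ENNReal.mul_rpow_of_nonneg _ _ hq0.le, ← ENNReal.rpow_mul, ← ENNReal.rpow_mul,
        one_div_mul_cancel hq0.ne', ENNReal.rpow_one]
      congr 2
      rw [Real.conjExponent]
      field_simp

lemma setLIntegral_ne_zero {X : Type*} [MeasurableSpace X] {μ : Measure X} {f : X → ℝ≥0∞}
    (hf : Measurable f) (hpos : ∀ᵐ x ∂μ, 0 < f x) {B : Set X} (hB : μ B ≠ 0) :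
    ∫⁻ x in B, f x ∂μ ≠ 0 := by
  rw [Ne, lintegral_eq_zero_iff hf]
  intro h
  have : ∀ᵐ _ ∂(μ.restrict B), False := by
    filter_upwards [h, ae_restrict_of_ae hpos] with x h1 h2
    exact h2.ne' h1
  rw [Filter.eventually_false_iff_eq_bot, ae_eq_bot, Measure.restrict_eq_zero] at this
  exact hB this

/-- The `A_q` condition on a set `B` yields the `A_∞` condition on `B` for the dual weight
`W ^ (-1/(q-1))`, with a constant depending only on `C` and `q`. The finiteness of the integrals
over `B` is part of the `A_q` condition because both factors are positive. -/
lemma aInfty_of_aq {X : Type*} [MeasurableSpace X] {μ : Measure X} {W : X → ℝ≥0∞}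
    (hW : Measurable W) (hpos : ∀ᵐ x ∂μ, 0 < W x ∧ W x ≠ ⊤) {q : ℝ} (hq : 1 < q) {C : ℝ≥0∞}
    (hC : C ≠ ⊤) {B : Set X} (hB : MeasurableSet B) (hB0 : μ B ≠ 0) (hBt : μ B ≠ ⊤)
    (h : ((μ B)⁻¹ * ∫⁻ x in B, W x ∂μ) *
      ((μ B)⁻¹ * ∫⁻ x in B, W x ^ (-(1 / (q - 1))) ∂μ) ^ (q - 1) ≤ C) :
    ∫⁻ x in B, W x ^ (-(1 / (q - 1))) ∂μ ≠ ⊤ ∧ ∀ E, MeasurableSet E → 2 * μ (E ∩ B) ≤ μ B →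
      μ.withDensity (fun x => W x ^ (-(1 / (q - 1)))) (E ∩ B) ≤
        (1 - ((C * 2 ^ q) ^ (1 / (q - 1)) + 1)⁻¹) *
          μ.withDensity (fun x => W x ^ (-(1 / (q - 1)))) B := by
  have hq0 : 0 < q := by linarith
  have hq1 : 0 < q - 1 := by linarith
  set V : X → ℝ≥0∞ := fun x => W x ^ (-(1 / (q - 1))) with hV
  have hVm : Measurable V := hW.pow_const _
  have hVpos : ∀ᵐ x ∂μ, 0 < V x := by
    filter_upwards [hpos] with x hx
    exact ENNReal.rpow_pos hx.1 hx.2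
  set ν := μ.withDensity V with hν
  have hVB : ∫⁻ x in B, V x ∂μ = ν B := (withDensity_apply V hB).symm
  change ((μ B)⁻¹ * ∫⁻ x in B, W x ∂μ) * ((μ B)⁻¹ * ∫⁻ x in B, V x ∂μ) ^ (q - 1) ≤ C at h
  change ∫⁻ x in B, V x ∂μ ≠ ⊤ ∧ _
  have hW0 := setLIntegral_ne_zero hW (hpos.mono fun x hx => hx.1) hB0
  have hV0 := setLIntegral_ne_zero hVm hVpos hB0
  set I := ∫⁻ x in B, W x ∂μ with hI
  rw [hVB] at h hV0 ⊢
  have hi0 : (μ B)⁻¹ ≠ 0 := ENNReal.inv_ne_zero.2 hBt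
  have hit : (μ B)⁻¹ ≠ ⊤ := ENNReal.inv_ne_top.2 hB0
  have h' := ne_top_of_le_ne_top hC h
  have hVt : ν B ≠ ⊤ := by
    intro ht
    rw [ht, ENNReal.mul_top hi0, ENNReal.top_rpow_of_pos hq1,
      ENNReal.mul_top (mul_ne_zero hi0 hW0)] at h'
    exact h' rfl
  have hIt : I ≠ ⊤ := by
    intro ht
    rw [ht, ENNReal.mul_top hi0, ENNReal.top_mul] at h'
    · exact h' rfl
    · exact ne_of_gt (ENNReal.rpow_pos (pos_iff_ne_zero.2 (mul_ne_zero hi0 hV0))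
        (ENNReal.mul_ne_top hit hVt))
  -- the `A_q` condition with denominators cleared
  have hclear : I * ν B ^ (q - 1) ≤ C * μ B ^ q := by
    have e : I * ν B ^ (q - 1)
        = (((μ B)⁻¹ * I) * ((μ B)⁻¹ * ν B) ^ (q - 1)) * μ B ^ q := by
      have e1 : μ B ^ q = μ B * μ B ^ (q - 1) := by
        conv_lhs => rw [← add_sub_cancel 1 q,
          ENNReal.rpow_add_of_nonneg _ _ zero_le_one hq1.le, ENNReal.rpow_one]
      have e2 : (μ B)⁻¹ * μ B = 1 := ENNReal.inv_mul_cancel hB0 hBt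
      have e3 : (μ B)⁻¹ ^ (q - 1) * μ B ^ (q - 1) = 1 := by
        rw [← ENNReal.mul_rpow_of_nonneg _ _ hq1.le, e2, ENNReal.one_rpow]
      rw [e1, ENNReal.mul_rpow_of_nonneg _ _ hq1.le]
      calc I * ν B ^ (q - 1)
          = ((μ B)⁻¹ * μ B) * ((μ B)⁻¹ ^ (q - 1) * μ B ^ (q - 1)) * (I * ν B ^ (q - 1)) := by
            rw [e2, e3, one_mul, one_mul]
        _ = _ := by ring
    rw [e]
    gcongr
  refine ⟨hVt, fun E hE hsmall => ?_⟩
  set M := (C * 2 ^ q) ^ (1 / (q - 1)) + 1 with hM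
  have hsplit : μ (E ∩ B) + μ (B \ E) = μ B := by
    rw [inter_comm]; exact measure_inter_add_sdiff B hE
  have hνsplit : ν (E ∩ B) + ν (B \ E) = ν B := by
    rw [inter_comm]; exact measure_inter_add_sdiff B hE
  have hEt : μ (E ∩ B) ≠ ⊤ := ne_top_of_le_ne_top hBt (measure_mono inter_subset_right)
  have hlarge : μ B ≤ 2 * μ (B \ E) := by
    rw [← hsplit, two_mul] at hsmall
    have := (ENNReal.add_le_add_iff_left hEt).1 hsmall
    rw [← hsplit, two_mul]
    gcongr
  have hcompl : ν B ≤ M * ν (B \ E) := by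
    have hHol := measure_rpow_le hW hpos hq (B \ E)
    change μ (B \ E) ^ q ≤ _ * (∫⁻ x in B \ E, V x ∂μ) ^ (q - 1) at hHol
    rw [← withDensity_apply V (hB.diff hE)] at hHol
    have h4 : I * ν B ^ (q - 1) ≤ I * ((C * 2 ^ q) * ν (B \ E) ^ (q - 1)) :=
      calc I * ν B ^ (q - 1) ≤ C * μ B ^ q := hclear
        _ ≤ C * (2 * μ (B \ E)) ^ q := by gcongr
        _ = C * 2 ^ q * μ (B \ E) ^ q := by
          rw [ENNReal.mul_rpow_of_nonneg _ _ hq0.le, mul_assoc]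
        _ ≤ C * 2 ^ q * (I * ν (B \ E) ^ (q - 1)) := by
          gcongr
          refine hHol.trans ?_
          gcongr
          exact lintegral_mono_set sdiff_subset
        _ = _ := by ring
    rw [ENNReal.mul_le_mul_iff_right hW0 hIt] at h4
    have h5 := ENNReal.rpow_le_rpow h4 (z := 1 / (q - 1)) (by positivity)
    rw [ENNReal.mul_rpow_of_nonneg _ _ (by positivity), ← ENNReal.rpow_mul, ← ENNReal.rpow_mul,
      mul_one_div_cancel hq1.ne', ENNReal.rpow_one, ENNReal.rpow_one] at h5
    refine h5.trans ?_
    gcongr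
    exact le_self_add
  have hM0 : M ≠ 0 := by simp [hM]
  have hMt : M ≠ ⊤ := by
    refine ENNReal.add_ne_top.2 ⟨?_, by simp⟩
    refine ENNReal.rpow_ne_top_of_nonneg (by positivity) ?_
    exact ENNReal.mul_ne_top hC (ENNReal.rpow_ne_top_of_nonneg hq0.le (by simp))
  have hBE : M⁻¹ * ν B ≤ ν (B \ E) := by
    rw [mul_comm, ← div_eq_mul_inv]
    exact ENNReal.div_le_of_le_mul' hcompl
  have hdt : ν (B \ E) ≠ ⊤ := ne_top_of_le_ne_top hVt (measure_mono sdiff_subset)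
  rw [ENNReal.sub_mul (fun _ _ => hVt), one_mul]
  calc ν (E ∩ B) = ν B - ν (B \ E) := by
        rw [← hνsplit]; exact (ENNReal.add_sub_cancel_right hdt).symm
    _ ≤ _ := tsub_le_tsub_left hBE _

lemma exists_small_exponent {L β : ℝ≥0∞} (hL0 : L ≠ 0) (hL : L ≠ ⊤) (hβ : β < 1) :
    ∃ ε : ℝ, 0 < ε ∧ L ^ ε * β < 1 := by
  have hcont : Filter.Tendsto (fun ε : ℝ => L ^ ε * β) (nhds 0) (nhds (L ^ (0 : ℝ) * β)) := by
    refine ENNReal.Tendsto.mul_const ?_ (Or.inr (hβ.trans ENNReal.one_lt_top).ne)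
    have hl : 0 < L.toReal := ENNReal.toReal_pos hL0 hL
    have hr := ENNReal.tendsto_ofReal (Real.continuousAt_const_rpow (b := 0) hl.ne').tendsto
    simpa only [← ENNReal.ofReal_rpow_of_pos hl, ENNReal.ofReal_toReal hL] using hr
  rw [ENNReal.rpow_zero, one_mul] at hcont
  have := (hcont.eventually_lt_const hβ).filter_mono (nhdsWithin_le_nhds (s := Ioi 0))
  obtain ⟨ε, h1, h2⟩ := (this.and self_mem_nhdsWithin).exists
  exact ⟨ε, h2, h1⟩

/-! ### The self-improvement property -/

/-- `MemAq` transported to the sup-norm space `Fin n → ℝ`, where cubes are closed balls, and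
expressed through the `ℝ≥0∞`-valued weight. -/
lemma memAq_iff {n : ℕ} {q : ℝ} {w : EuclideanSpace ℝ (Fin n) → ℝ}
    (hw_pos : ∀ᵐ x ∂volume, 0 < w x) :
    MemAq q w ↔ ∃ C : ℝ≥0∞, C ≠ ⊤ ∧ ∀ (c : Fin n → ℝ) (r : ℝ), 0 < r →
      ((volume (closedBall c r))⁻¹ *
          ∫⁻ y in closedBall c r, ENNReal.ofReal (w (WithLp.toLp 2 y))) *
        ((volume (closedBall c r))⁻¹ * ∫⁻ y in closedBall c r,
          ENNReal.ofReal (w (WithLp.toLp 2 y)) ^ (-(1 / (q - 1)))) ^ (q - 1) ≤ C := by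
  have hmp := PiLp.volume_preserving_toLp (Fin n)
  have hemb : MeasurableEmbedding (WithLp.toLp 2 : (Fin n → ℝ) → EuclideanSpace ℝ (Fin n)) :=
    (MeasurableEquiv.toLp 2 (Fin n → ℝ)).measurableEmbedding
  have hpre : ∀ (c : Fin n → ℝ) (r : ℝ), 0 < r →
      WithLp.toLp 2 ⁻¹' axisCube (WithLp.toLp 2 c) r = closedBall c r := by
    intro c r hr
    ext y
    simp [axisCube, mem_closedBall, dist_pi_le_iff hr.le, Real.dist_eq]
  have hvol : ∀ (c : Fin n → ℝ) (r : ℝ), 0 < r →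
      volume (axisCube (WithLp.toLp 2 c) r) = volume (closedBall c r) := by
    intro c r hr
    rw [← hpre c r hr, hmp.measure_preimage_emb hemb]
  have hintg : ∀ (c : Fin n → ℝ) (r : ℝ), 0 < r → ∀ g : EuclideanSpace ℝ (Fin n) → ℝ≥0∞,
      ∫⁻ x in axisCube (WithLp.toLp 2 c) r, g x
        = ∫⁻ y in closedBall c r, g (WithLp.toLp 2 y) := by
    intro c r hr g
    rw [← hpre c r hr, hmp.setLIntegral_comp_preimage_emb hemb]
  have hpow : ∀ s : Set (EuclideanSpace ℝ (Fin n)), ∀ p : ℝ,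
      ∫⁻ x in s, ENNReal.ofReal (w x ^ p) = ∫⁻ x in s, ENNReal.ofReal (w x) ^ p := by
    intro s p
    refine lintegral_congr_ae (ae_restrict_of_ae ?_)
    filter_upwards [hw_pos] with x hx
    exact (ENNReal.ofReal_rpow_of_pos hx).symm
  constructor
  · rintro ⟨C, hC, h⟩
    refine ⟨C, hC, fun c r hr => ?_⟩
    have := h (WithLp.toLp 2 c) r hr
    rwa [hpow, hvol c r hr, hintg c r hr, hintg c r hr] at this
  · rintro ⟨C, hC, h⟩
    refine ⟨C, hC, fun c r hr => ?_⟩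
    have := h (WithLp.ofLp c) r hr
    rwa [← hvol _ r hr, ← hintg _ r hr fun x => ENNReal.ofReal (w x),
      ← hintg _ r hr fun x => ENNReal.ofReal (w x) ^ (-(1 / (q - 1))), ← hpow] at this

/-- if `1 < q < ∞` and `w ∈ A_q(ℝⁿ)` is a weight, then there is
`0 < σ < q − 1` with `w ∈ A_{q−σ}(ℝⁿ)`. -/
theorem muckenhoupt_self_improvement {n : ℕ} (q : ℝ) (hq : 1 < q)
    (w : EuclideanSpace ℝ (Fin n) → ℝ) (hw_meas : Measurable w)
    (hw_pos : ∀ᵐ x ∂volume, 0 < w x) (hw : MemAq q w) :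
    ∃ σ : ℝ, 0 < σ ∧ σ < q - 1 ∧ MemAq (q - σ) w := by
  have hq1 : 0 < q - 1 := by linarith
  obtain ⟨C, hC, hAq⟩ := (memAq_iff hw_pos).1 hw
  set W : (Fin n → ℝ) → ℝ≥0∞ := fun y => ENNReal.ofReal (w (WithLp.toLp 2 y)) with hWdef
  have hWm : Measurable W :=
    (hw_meas.comp (PiLp.volume_preserving_toLp (Fin n)).measurable).ennreal_ofReal
  have hWpos : ∀ᵐ y ∂volume, 0 < W y ∧ W y ≠ ⊤ := by
    filter_upwards [(PiLp.volume_preserving_toLp (Fin n)).quasiMeasurePreserving.ae hw_pos]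
      with y hy
    exact ⟨ENNReal.ofReal_pos.2 hy, ENNReal.ofReal_ne_top⟩
  set V : (Fin n → ℝ) → ℝ≥0∞ := fun y => W y ^ (-(1 / (q - 1))) with hVdef
  have hVm : Measurable V := hWm.pow_const _
  have hB0 : ∀ (c : Fin n → ℝ) (r : ℝ), 0 < r → volume (closedBall c r) ≠ 0 := fun c r hr =>
    (measure_closedBall_pos volume c hr).ne'
  have hBt : ∀ (c : Fin n → ℝ) (r : ℝ), volume (closedBall c r) ≠ ⊤ := fun c r =>
    measure_closedBall_lt_top.ne
  have hAinf := fun c r (hr : 0 < r) => aInfty_of_aq hWm hWpos hq hC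
    (measurableSet_closedBall (x := c) (ε := r)) (hB0 c r hr) (hBt c r) (hAq c r hr)
  set β : ℝ≥0∞ := 1 - ((C * 2 ^ q) ^ (1 / (q - 1)) + 1)⁻¹ with hβdef
  have hβ : β < 1 := by
    refine ENNReal.sub_lt_self (by simp) (by simp) (ENNReal.inv_ne_zero.2 ?_)
    refine ENNReal.add_ne_top.2 ⟨ENNReal.rpow_ne_top_of_nonneg (by positivity) ?_, by simp⟩
    exact ENNReal.mul_ne_top hC (ENNReal.rpow_ne_top_of_nonneg (by linarith) (by simp))
  have hLt : (2 * 2 ^ n : ℝ≥0∞) ≠ ⊤ := ENNReal.mul_ne_top (by simp) (ENNReal.pow_ne_top (by simp))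
  obtain ⟨ε, hε, hεβ⟩ := exists_small_exponent (L := 2 * 2 ^ n) (by simp) hLt hβ
  have hRH := reverse_holder_closedBall hVm (β := β) (fun c r hr => (hAinf c r hr).1)
    (fun c r hr => (hAinf c r hr).2) hε
  set K : ℝ≥0∞ := 1 + (2 * 2 ^ n) ^ ε * (1 - (2 * 2 ^ n) ^ ε * β)⁻¹ with hKdef
  have hK : K ≠ ⊤ := by
    refine ENNReal.add_ne_top.2 ⟨by simp, ENNReal.mul_ne_top
      (ENNReal.rpow_ne_top_of_nonneg hε.le hLt) (ENNReal.inv_ne_top.2 ?_)⟩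
    exact (tsub_pos_of_lt hεβ).ne'
  have hε1 : 0 < 1 + ε := by linarith
  set s := (q - 1) / (1 + ε) with hs
  have hs0 : 0 < s := by positivity
  -- `σ` is chosen so that the dual weight of `W` for the exponent `q - σ` is `V ^ (1 + ε)`
  refine ⟨q - 1 - s, ?_, by linarith, ?_⟩
  · rw [sub_pos, hs, div_lt_iff₀ hε1]
    nlinarith
  rw [memAq_iff hw_pos]
  refine ⟨K ^ s * C, ENNReal.mul_ne_top (ENNReal.rpow_ne_top_of_nonneg hs0.le hK) hC,
    fun c r hr => ?_⟩
  have hexp : q - (q - 1 - s) - 1 = s := by ring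
  rw [hexp]
  have hVW : ∀ y, ENNReal.ofReal (w (WithLp.toLp 2 y)) ^ (-(1 / s)) = V y ^ (1 + ε) := by
    intro y
    simp only [hVdef, hWdef]
    rw [← ENNReal.rpow_mul]
    congr 1
    rw [hs]
    field_simp
  simp only [hVW]
  have hr' := hRH c r hr
  have hAq' := hAq c r hr
  change (_ * ∫⁻ y in closedBall c r, W y) * (_ * ∫⁻ y in closedBall c r, V y) ^ (q - 1) ≤ C
    at hAq'
  change (_ * ∫⁻ y in closedBall c r, W y) * _ ≤ _
  set m := volume (closedBall c r) with hm
  set I := ∫⁻ y in closedBall c r, V y with hI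
  have hdual : (m⁻¹ * ∫⁻ y in closedBall c r, V y ^ (1 + ε)) ^ s ≤ K ^ s * (m⁻¹ * I) ^ (q - 1) := by
    calc (m⁻¹ * ∫⁻ y in closedBall c r, V y ^ (1 + ε)) ^ s
        ≤ (m⁻¹ * (K * ((I / m) ^ ε * I))) ^ s := by gcongr
      _ = (K * (m⁻¹ * I) ^ (1 + ε)) ^ s := by
        congr 1
        rw [ENNReal.rpow_add_of_nonneg _ _ zero_le_one hε.le, ENNReal.rpow_one, div_eq_mul_inv,
          mul_comm I]
        ring
      _ = _ := by
        rw [ENNReal.mul_rpow_of_nonneg _ _ hs0.le, ← ENNReal.rpow_mul]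
        congr 2
        rw [hs]
        field_simp
  calc _ ≤ (m⁻¹ * ∫⁻ y in closedBall c r, W y) * (K ^ s * (m⁻¹ * I) ^ (q - 1)) := by gcongr
    _ = K ^ s * ((m⁻¹ * ∫⁻ y in closedBall c r, W y) * (m⁻¹ * I) ^ (q - 1)) := by ring
    _ ≤ K ^ s * C := by gcongr
end

section
/- Let 1 < q < ∞ and let w be a weight on ℝⁿ with w ∈ A_q(ℝⁿ). Then there exists α > 1 such that w^α ∈ A_q(ℝⁿ). -/
/-!
The improvement follows from a reverse Hölder inequality
`⨍_Q v ^ (1 + δ) ≤ K (⨍_Q v) ^ (1 + δ)`, valid with one common `δ > 0` for `v = w` and for the dual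
weight `v = σ = w ^ (-1 / (q - 1))`. Multiplying the two inequalities bounds the `A_q` product of
`w ^ (1 + δ)` by a multiple of the `(1 + δ)`-th power of that of `w` (`exists_improvement`).

The input to the reverse Hölder inequality is the `A_∞` condition (`lintegral_subset_le`): by Hölder,
`|F| ^ q ≤ w(F) σ(F) ^ (q - 1)` for every `F ⊆ Q`, so the `A_q` bound gives a lower bound on
`w(F) / w(Q)` when `|F| ≥ |Q| / 2`. Passing to complements, `|E| ≤ |Q| / 2` forces
`w(E) ≤ b w(Q)` with a fixed `b < 1`. The same holds for `σ`, which lies in the dual class.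

The reverse Hölder inequality is proved first for the averages `v_N` of `v` over the dyadic subcubes
of generation `N`, by strong induction on `N` (`energy_le`). Stop at the maximal dyadic subcubes whose
average exceeds twice that of `Q` (`exists_stopping_set`). Outside their union `E` the function `v_N`
is at most `2 ⨍_Q v`; on each of them the induction hypothesis applies, with an average at most
`2 ^ (n + 1) ⨍_Q v`; and `|E| ≤ |Q| / 2`, so `v(E) ≤ b v(Q)`. The constant therefore obeys
`K = 2 ^ δ + K (2 ^ (n + 1)) ^ δ b`, which has a finite solution independent of `N` once
`(2 ^ (n + 1)) ^ δ b < 1`. Working at finite depth means that no integral of `v ^ (1 + δ)` has to be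
known finite in advance. Lebesgue differentiation and Fatou's lemma let `N → ∞` (`reverse_holder`).

The argument takes place in `Fin n → ℝ`, whose sup-norm closed balls are the axis-parallel cubes, and
is transferred to `EuclideanSpace ℝ (Fin n)` by the volume-preserving identification.
-/

open MeasureTheory Metric Set ENNReal

namespace Muckenhoupt

variable {n : ℕ}

/-! ### Dyadic cubes and averages -/

/-- The half-open cube with lower corner `a` and edge-length `s`. Half-open cubes are used so that
the dyadic children of a cube partition it exactly. -/
def cube (a : Fin n → ℝ) (s : ℝ) : Set (Fin n → ℝ) :=
  Set.pi univ fun i => Ioc (a i) (a i + s)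

/-- The lower corner of the dyadic child, with index `ε`, of `cube a s`; the child itself is
`cube (corner a s ε) (s / 2)`. -/
noncomputable def corner (a : Fin n → ℝ) (s : ℝ) (ε : Fin n → Bool) : Fin n → ℝ :=
  fun i => a i + if ε i then s / 2 else 0

lemma measurableSet_cube (a : Fin n → ℝ) (s : ℝ) : MeasurableSet (cube a s) :=
  MeasurableSet.univ_pi fun _ => measurableSet_Ioc

lemma volume_cube (a : Fin n → ℝ) (s : ℝ) : volume (cube a s) = ENNReal.ofReal s ^ n := by
  simp [cube, Real.volume_pi_Ioc]

lemma volume_cube_ne_zero (a : Fin n → ℝ) {s : ℝ} (hs : 0 < s) : volume (cube a s) ≠ 0 := by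
  rw [volume_cube]; exact pow_ne_zero _ (by simpa using hs)

lemma volume_cube_ne_top (a : Fin n → ℝ) (s : ℝ) : volume (cube a s) ≠ ⊤ := by
  rw [volume_cube]; exact ENNReal.pow_ne_top ENNReal.ofReal_ne_top

lemma volume_cube_eq_child (a b : Fin n → ℝ) {s : ℝ} :
    volume (cube a s) = 2 ^ n * volume (cube b (s / 2)) := by
  rw [volume_cube, volume_cube, ← mul_pow]
  congr 1
  rw [show (2 : ℝ≥0∞) = ENNReal.ofReal 2 by simp, ← ENNReal.ofReal_mul (by norm_num)]
  congr 1; ring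

lemma cube_ae_eq_closedBall (a : Fin n → ℝ) {s : ℝ} (hs : 0 < s) :
    cube a s =ᵐ[volume] closedBall (fun i => a i + s / 2) (s / 2) := by
  have h : closedBall (fun i => a i + s / 2) (s / 2) = Icc a (fun i => a i + s) := by
    rw [closedBall_pi _ (by positivity), ← pi_univ_Icc]
    congr 1; ext1 i
    rw [Real.Icc_eq_closedBall]
    congr 1 <;> ring
  rw [h]
  exact Measure.univ_pi_Ioc_ae_eq_Icc

lemma disjoint_children (a : Fin n → ℝ) (s : ℝ) :
    Pairwise (Function.onFun Disjoint fun ε => cube (corner a s ε) (s / 2)) := by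
  intro ε ε' h
  obtain ⟨i, hi⟩ := Function.ne_iff.1 h
  refine Set.disjoint_left.2 fun x hx hx' => hi ?_
  have h1 := hx i (mem_univ i)
  have h2 := hx' i (mem_univ i)
  simp only [corner, mem_Ioc] at h1 h2
  cases he : ε i <;> cases he' : ε' i <;> simp [he, he'] at h1 h2 ⊢ <;> linarith

lemma iUnion_children (a : Fin n → ℝ) {s : ℝ} (hs : 0 < s) :
    ⋃ ε, cube (corner a s ε) (s / 2) = cube a s := by
  ext x
  simp only [mem_iUnion]
  constructor
  · rintro ⟨ε, hx⟩ i hi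
    have h1 := hx i hi
    simp only [corner, mem_Ioc] at h1 ⊢
    cases he : ε i <;> simp [he] at h1 <;> constructor <;> linarith
  · intro hx
    refine ⟨fun i => decide (a i + s / 2 < x i), fun i hi => ?_⟩
    have h1 := hx i hi
    simp only [corner, mem_Ioc, decide_eq_true_eq] at h1 ⊢
    split_ifs <;> constructor <;> linarith

lemma child_subset (a : Fin n → ℝ) {s : ℝ} (hs : 0 < s) (ε : Fin n → Bool) :
    cube (corner a s ε) (s / 2) ⊆ cube a s := by
  rw [← iUnion_children a hs]; exact subset_iUnion (fun ε => cube (corner a s ε) (s / 2)) ε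

lemma lintegral_cube_eq_sum (v : (Fin n → ℝ) → ℝ≥0∞) (a : Fin n → ℝ) {s : ℝ} (hs : 0 < s) :
    ∫⁻ x in cube a s, v x = ∑ ε, ∫⁻ x in cube (corner a s ε) (s / 2), v x := by
  conv_lhs => rw [← iUnion_children a hs]
  rw [lintegral_iUnion (fun _ => measurableSet_cube _ _) (disjoint_children a s), tsum_fintype]

/-- The average of `v` over `cube a s`. -/
noncomputable def av (v : (Fin n → ℝ) → ℝ≥0∞) (a : Fin n → ℝ) (s : ℝ) : ℝ≥0∞ :=
  (∫⁻ x in cube a s, v x) / volume (cube a s)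

lemma av_mul_volume (v : (Fin n → ℝ) → ℝ≥0∞) (a : Fin n → ℝ) {s : ℝ} (hs : 0 < s) :
    av v a s * volume (cube a s) = ∫⁻ x in cube a s, v x :=
  ENNReal.div_mul_cancel (volume_cube_ne_zero a hs) (volume_cube_ne_top a s)

lemma av_child_le (v : (Fin n → ℝ) → ℝ≥0∞) (a : Fin n → ℝ) {s : ℝ} (hs : 0 < s)
    (ε : Fin n → Bool) : av v (corner a s ε) (s / 2) ≤ 2 ^ n * av v a s := by
  have h0 := volume_cube_ne_zero (corner a s ε) (half_pos hs)
  refine (ENNReal.div_le_iff h0 (volume_cube_ne_top _ _)).2 ?_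
  calc ∫⁻ x in cube (corner a s ε) (s / 2), v x ≤ ∫⁻ x in cube a s, v x :=
        lintegral_mono_set (child_subset a hs ε)
    _ = av v a s * volume (cube a s) := (av_mul_volume v a hs).symm
    _ = _ := by rw [volume_cube_eq_child a (corner a s ε)]; ring

/-! ### Reverse Hölder inequality for dyadic averages -/

/-- The integral of `(v_N) ^ (1 + δ)` over `cube a s`, where `v_N` is the function obtained from `v`
by averaging over the dyadic subcubes of generation `N`. -/
noncomputable def energy (δ : ℝ) (v : (Fin n → ℝ) → ℝ≥0∞) : ℕ → (Fin n → ℝ) → ℝ → ℝ≥0∞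
  | 0, a, s => av v a s ^ δ * ∫⁻ x in cube a s, v x
  | N + 1, a, s => ∑ ε, energy δ v N (corner a s ε) (s / 2)

/-- Finite-depth stopping time at height `t`. The set `E` is the union of the maximal dyadic
subcubes, of generation at most `M`, on which the average of `v` exceeds `t`: off `E` the averaged
function is at most `t`, and on each cube of `E` the average lies between `t` and `2 ^ n * t`, so the
bound assumed for smaller depths applies there. -/
lemma exists_stopping_set {δ : ℝ} (hδ : 0 ≤ δ) (v : (Fin n → ℝ) → ℝ≥0∞) (K t : ℝ≥0∞) (N : ℕ)
    (hP : ∀ M < N, ∀ a : Fin n → ℝ, ∀ s : ℝ, 0 < s →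
      energy δ v M a s ≤ K * (av v a s ^ δ * ∫⁻ x in cube a s, v x)) :
    ∀ M ≤ N, ∀ a : Fin n → ℝ, ∀ s : ℝ, 0 < s → av v a s ≤ t →
      ∃ E ⊆ cube a s, MeasurableSet E ∧ t * volume E ≤ ∫⁻ x in E, v x ∧
        energy δ v M a s ≤ t ^ δ * (∫⁻ x in cube a s, v x) +
          K * ((2 ^ n * t) ^ δ * ∫⁻ x in E, v x) := by
  intro M
  induction M with
  | zero =>
    intro _ a s hs hav
    refine ⟨∅, empty_subset _, MeasurableSet.empty, by simp, ?_⟩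
    simp only [energy, Measure.restrict_empty, lintegral_zero_measure, mul_zero, add_zero]
    gcongr
  | succ M ih =>
    intro hM a s hs hav
    have key : ∀ ε : Fin n → Bool, ∃ E ⊆ cube (corner a s ε) (s / 2), MeasurableSet E ∧
        t * volume E ≤ ∫⁻ x in E, v x ∧
        energy δ v M (corner a s ε) (s / 2) ≤
          t ^ δ * (∫⁻ x in cube (corner a s ε) (s / 2), v x) +
          K * ((2 ^ n * t) ^ δ * ∫⁻ x in E, v x) := by
      intro ε
      by_cases hε : av v (corner a s ε) (s / 2) ≤ t
      · exact ih (by omega) _ _ (half_pos hs) hε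
      · refine ⟨_, Subset.rfl, measurableSet_cube _ _, ?_, ?_⟩
        · rw [← av_mul_volume v _ (half_pos hs)]
          gcongr
          exact (not_le.1 hε).le
        · refine le_trans (hP M (by omega) _ _ (half_pos hs)) (le_trans ?_ le_add_self)
          gcongr
          exact (av_child_le v a hs ε).trans (by gcongr)
    choose E hEsub hEm hEt hEe using key
    have hdisj : Pairwise (Function.onFun Disjoint E) := fun i j hij =>
      (disjoint_children a s hij).mono (hEsub i) (hEsub j)
    have hint : ∫⁻ x in ⋃ ε, E ε, v x = ∑ ε, ∫⁻ x in E ε, v x := by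
      rw [lintegral_iUnion hEm hdisj, tsum_fintype]
    refine ⟨⋃ ε, E ε, iUnion_subset fun ε => (hEsub ε).trans (child_subset a hs ε),
      MeasurableSet.iUnion hEm, ?_, ?_⟩
    · rw [hint, measure_iUnion hdisj hEm, tsum_fintype, Finset.mul_sum]
      exact Finset.sum_le_sum fun ε _ => hEt ε
    · rw [hint, lintegral_cube_eq_sum v a hs]
      simp only [energy, Finset.mul_sum]
      rw [← Finset.sum_add_distrib]
      exact Finset.sum_le_sum fun ε _ => hEe ε

/-- The reverse Hölder inequality for the dyadic averages, with a constant independent of the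
depth. Stopping at twice the average of `v` gives a set `E` filling at most half of the cube, hence
carrying at most the fraction `b` of the `v`-mass; the constant `K = 2 ^ δ / (1 - (2 ^ (n + 1)) ^ δ b)`
is the fixed point of the resulting recursion. -/
lemma energy_le {δ : ℝ} (hδ : 0 ≤ δ) (v : (Fin n → ℝ) → ℝ≥0∞) (b : ℝ≥0∞)
    (hb : (2 ^ n * 2) ^ δ * b < 1)
    (hfin : ∀ (a : Fin n → ℝ) (s : ℝ), 0 < s → ∫⁻ x in cube a s, v x ≠ ⊤)
    (hpos : ∀ (a : Fin n → ℝ) (s : ℝ), 0 < s → ∫⁻ x in cube a s, v x ≠ 0)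
    (hA : ∀ (a : Fin n → ℝ) (s : ℝ), 0 < s → ∀ E ⊆ cube a s, MeasurableSet E →
      2 * volume E ≤ volume (cube a s) → ∫⁻ x in E, v x ≤ b * ∫⁻ x in cube a s, v x)
    (N : ℕ) : ∀ (a : Fin n → ℝ) (s : ℝ), 0 < s →
      energy δ v N a s ≤
        2 ^ δ * (1 - (2 ^ n * 2) ^ δ * b)⁻¹ * (av v a s ^ δ * ∫⁻ x in cube a s, v x) := by
  set B := (2 ^ n * 2 : ℝ≥0∞) ^ δ * b with hB
  set K := (2 : ℝ≥0∞) ^ δ * (1 - B)⁻¹ with hK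
  have hKB : 2 ^ δ + K * B = K := by
    have h1 : K * (1 - B) = 2 ^ δ := by
      rw [hK, mul_assoc, ENNReal.inv_mul_cancel (tsub_pos_of_lt hb).ne' (by finiteness), mul_one]
    rw [← h1, ← mul_add, tsub_add_cancel_of_le hb.le, mul_one]
  induction N using Nat.strong_induction_on with
  | _ N ih =>
    intro a s hs
    have hav0 : av v a s ≠ 0 := (ENNReal.div_pos (hpos a s hs) (volume_cube_ne_top _ _)).ne'
    have havt : av v a s ≠ ⊤ := ENNReal.div_ne_top (hfin a s hs) (volume_cube_ne_zero _ hs)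
    obtain ⟨E, hEsub, hEm, hEt, hEe⟩ := exists_stopping_set hδ v K (2 * av v a s) N ih N le_rfl a s hs
      (by rw [two_mul]; exact le_self_add)
    have hhalf : 2 * volume E ≤ volume (cube a s) := by
      have h : av v a s * (2 * volume E) ≤ av v a s * volume (cube a s) := by
        rw [av_mul_volume v a hs]
        calc _ = 2 * av v a s * volume E := by ring
          _ ≤ _ := hEt
          _ ≤ _ := lintegral_mono_set hEsub
      exact (ENNReal.mul_le_mul_iff_right hav0 havt).1 h
    calc energy δ v N a s ≤ _ := hEe
      _ ≤ (2 * av v a s) ^ δ * (∫⁻ x in cube a s, v x) +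
          K * ((2 ^ n * (2 * av v a s)) ^ δ * (b * ∫⁻ x in cube a s, v x)) := by
        gcongr
        exact hA a s hs E hEsub hEm hhalf
      _ = (2 ^ δ + K * B) * (av v a s ^ δ * ∫⁻ x in cube a s, v x) := by
        rw [← mul_assoc (2 ^ n : ℝ≥0∞), ENNReal.mul_rpow_of_nonneg _ _ hδ,
          ENNReal.mul_rpow_of_nonneg _ (av v a s) hδ, hB]
        ring
      _ = _ := by rw [hKB]

/-! ### Passage to the limit -/

/-- The function equal, on each dyadic subcube of generation `N` of `cube a s`, to the average of
`v` over that subcube, and (for `N ≥ 1`) zero outside `cube a s`. -/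
noncomputable def dyadicAvg (v : (Fin n → ℝ) → ℝ≥0∞) :
    ℕ → (Fin n → ℝ) → ℝ → (Fin n → ℝ) → ℝ≥0∞
  | 0, a, s => fun _ => av v a s
  | N + 1, a, s => fun x =>
      ∑ ε, (cube (corner a s ε) (s / 2)).indicator (dyadicAvg v N (corner a s ε) (s / 2)) x

lemma measurable_dyadicAvg (v : (Fin n → ℝ) → ℝ≥0∞) (N : ℕ) :
    ∀ (a : Fin n → ℝ) (s : ℝ), Measurable (dyadicAvg v N a s) := by
  induction N with
  | zero => intro a s; exact measurable_const
  | succ N ih =>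
    intro a s
    exact Finset.measurable_sum _ fun ε _ => (ih _ _).indicator (measurableSet_cube _ _)

lemma dyadicAvg_succ (v : (Fin n → ℝ) → ℝ≥0∞) (N : ℕ) (a : Fin n → ℝ) (s : ℝ)
    (ε : Fin n → Bool) {x : Fin n → ℝ} (hx : x ∈ cube (corner a s ε) (s / 2)) :
    dyadicAvg v (N + 1) a s x = dyadicAvg v N (corner a s ε) (s / 2) x := by
  simp only [dyadicAvg]
  rw [Finset.sum_eq_single ε, indicator_of_mem hx]
  · intro ε' _ h
    exact indicator_of_notMem (fun hx' => Set.disjoint_left.1 (disjoint_children a s h) hx' hx) _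
  · simp

lemma lintegral_dyadicAvg_rpow {δ : ℝ} (hδ : 0 ≤ δ) (v : (Fin n → ℝ) → ℝ≥0∞) (N : ℕ) :
    ∀ (a : Fin n → ℝ) (s : ℝ), 0 < s →
      ∫⁻ x in cube a s, dyadicAvg v N a s x ^ (1 + δ) = energy δ v N a s := by
  induction N with
  | zero =>
    intro a s hs
    simp only [dyadicAvg, energy, lintegral_const, Measure.restrict_apply_univ]
    rw [ENNReal.rpow_add_of_nonneg _ _ zero_le_one hδ, ENNReal.rpow_one, ← av_mul_volume v a hs]
    ring
  | succ N ih =>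
    intro a s hs
    rw [lintegral_cube_eq_sum _ a hs]
    simp only [energy]
    refine Finset.sum_congr rfl fun ε _ => ?_
    rw [← ih _ _ (half_pos hs)]
    refine setLIntegral_congr_fun (measurableSet_cube _ _) fun x hx => ?_
    simp only [dyadicAvg_succ v N a s ε hx]

lemma exists_dyadicAvg_eq (v : (Fin n → ℝ) → ℝ≥0∞) (N : ℕ) :
    ∀ (a : Fin n → ℝ) (s : ℝ), 0 < s → ∀ x ∈ cube a s, ∃ c, x ∈ cube c (s / 2 ^ N) ∧
      cube c (s / 2 ^ N) ⊆ cube a s ∧ dyadicAvg v N a s x = av v c (s / 2 ^ N) := by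
  induction N with
  | zero => intro a s hs x hx; exact ⟨a, by simpa using hx, by simp, by simp [dyadicAvg]⟩
  | succ N ih =>
    intro a s hs x hx
    rw [← iUnion_children a hs] at hx
    obtain ⟨ε, hε⟩ := mem_iUnion.1 hx
    obtain ⟨c, h1, h2, h3⟩ := ih _ _ (half_pos hs) x hε
    have he : s / 2 / 2 ^ N = s / 2 ^ (N + 1) := by rw [pow_succ, div_div, mul_comm]
    rw [he] at h1 h2 h3
    exact ⟨c, h1, h2.trans (child_subset a hs ε), by rw [dyadicAvg_succ v N a s ε hε, h3]⟩

open Filter Topology in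
/-- The Lebesgue differentiation theorem along dyadic subcubes: up to null sets they are closed
balls for the sup norm. -/
lemma ae_tendsto_dyadicAvg (v : (Fin n → ℝ) → ℝ≥0∞) (hv : Measurable v) (a : Fin n → ℝ) {s : ℝ}
    (hs : 0 < s) (hfin : ∫⁻ x in cube a s, v x ≠ ⊤) :
    ∀ᵐ x ∂(volume.restrict (cube a s)),
      Tendsto (fun N => dyadicAvg v N a s x) atTop (𝓝 (v x)) := by
  rw [ae_restrict_iff' (measurableSet_cube a s)]
  have hm := measurableSet_cube a s
  have hfin' : ∫⁻ x, (cube a s).indicator v x ≠ ⊤ := by rwa [lintegral_indicator hm]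
  filter_upwards [(IsUnifLocDoublingMeasure.vitaliFamily (volume : Measure (Fin n → ℝ))
    1).ae_tendsto_lintegral_div' (hv.indicator hm) hfin'] with x hx hxQ
  rw [indicator_of_mem hxQ] at hx
  choose c hc1 hc2 hc3 using fun N => exists_dyadicAvg_eq v N a s hs x hxQ
  have hsN : ∀ N : ℕ, 0 < s / 2 ^ N := fun N => by positivity
  have hlim : Tendsto (fun N : ℕ => s / 2 ^ N / 2) atTop (𝓝[>] 0) := by
    refine tendsto_nhdsWithin_iff.2 ⟨?_, Eventually.of_forall fun N => half_pos (hsN N)⟩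
    have h := (tendsto_pow_atTop_nhds_zero_of_lt_one (r := (1 / 2 : ℝ)) (by norm_num)
      (by norm_num)).const_mul (s / 2)
    rw [mul_zero] at h
    refine h.congr fun N => ?_
    rw [div_pow, one_pow]; ring
  have hmem : ∀ N, x ∈ closedBall (fun i => c N i + s / 2 ^ N / 2) (1 * (s / 2 ^ N / 2)) := by
    intro N
    rw [one_mul, closedBall_pi _ (half_pos (hsN N)).le]
    intro i hi
    have h := hc1 N i hi
    rw [mem_closedBall, Real.dist_eq, abs_le]
    rw [mem_Ioc] at h
    constructor <;> linarith
  have h := hx.comp (IsUnifLocDoublingMeasure.tendsto_closedBall_filterAt volume _ _ hlim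
    (Eventually.of_forall hmem))
  refine h.congr fun N => ?_
  have hae := cube_ae_eq_closedBall (c N) (hsN N)
  rw [hc3 N, Function.comp_apply, av, measure_congr hae, ← setLIntegral_congr hae]
  congr 1
  exact setLIntegral_congr_fun (measurableSet_cube _ _) fun y hy => indicator_of_mem (hc2 N hy) _

/-- Reverse Hölder inequality for a function satisfying the `A_∞` condition `hA`: Fatou's lemma passes
the uniform bound for the dyadic averages to the limit. -/
lemma reverse_holder {δ : ℝ} (hδ : 0 ≤ δ) (v : (Fin n → ℝ) → ℝ≥0∞) (hv : Measurable v) (b : ℝ≥0∞)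
    (hb : (2 ^ n * 2) ^ δ * b < 1)
    (hfin : ∀ (a : Fin n → ℝ) (s : ℝ), 0 < s → ∫⁻ x in cube a s, v x ≠ ⊤)
    (hpos : ∀ (a : Fin n → ℝ) (s : ℝ), 0 < s → ∫⁻ x in cube a s, v x ≠ 0)
    (hA : ∀ (a : Fin n → ℝ) (s : ℝ), 0 < s → ∀ E ⊆ cube a s, MeasurableSet E →
      2 * volume E ≤ volume (cube a s) → ∫⁻ x in E, v x ≤ b * ∫⁻ x in cube a s, v x)
    (a : Fin n → ℝ) (s : ℝ) (hs : 0 < s) :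
    av (fun x => v x ^ (1 + δ)) a s ≤
      2 ^ δ * (1 - (2 ^ n * 2) ^ δ * b)⁻¹ * av v a s ^ (1 + δ) := by
  have h1 : ∫⁻ x in cube a s, v x ^ (1 + δ) ≤
      2 ^ δ * (1 - (2 ^ n * 2) ^ δ * b)⁻¹ * (av v a s ^ δ * ∫⁻ x in cube a s, v x) := by
    calc ∫⁻ x in cube a s, v x ^ (1 + δ)
        = ∫⁻ x in cube a s,
            Filter.liminf (fun N => dyadicAvg v N a s x ^ (1 + δ)) Filter.atTop := by
          refine lintegral_congr_ae ?_
          filter_upwards [ae_tendsto_dyadicAvg v hv a hs (hfin a s hs)] with x hx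
          exact (((ENNReal.continuous_rpow_const (y := 1 + δ)).tendsto _).comp hx).liminf_eq.symm
      _ ≤ Filter.liminf (fun N => ∫⁻ x in cube a s, dyadicAvg v N a s x ^ (1 + δ)) Filter.atTop :=
          lintegral_liminf_le fun N => (measurable_dyadicAvg v N a s).pow_const _
      _ ≤ _ := by
          refine Filter.liminf_le_of_le (by isBoundedDefault) fun y hy => ?_
          obtain ⟨N, hN⟩ := hy.exists
          rw [lintegral_dyadicAvg_rpow hδ v N a s hs] at hN
          exact hN.trans (energy_le hδ v b hb hfin hpos hA N a s hs)
  rw [av]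
  refine (ENNReal.div_le_iff (volume_cube_ne_zero a hs) (volume_cube_ne_top a s)).2 (h1.trans ?_)
  rw [← av_mul_volume v a hs, ENNReal.rpow_add_of_nonneg _ _ zero_le_one hδ, ENNReal.rpow_one]
  exact le_of_eq (by ring)

/-! ### The Muckenhoupt condition for a pair of dual weights -/

/-- Hölder's inequality for a pair of dual weights. -/
lemma volume_rpow_le (v σ : (Fin n → ℝ) → ℝ≥0∞) (hv : Measurable v) (hσ : Measurable σ) {p : ℝ}
    (hp : 0 < p) (hvσ : ∀ᵐ x, v x * σ x ^ p = 1) (F : Set (Fin n → ℝ)) :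
    volume F ^ (1 + p) ≤ (∫⁻ x in F, v x) * (∫⁻ x in F, σ x) ^ p := by
  have hp1 : 0 < 1 + p := by positivity
  have hconj : (1 + p).HolderConjugate ((1 + p) / p) := by
    rw [Real.holderConjugate_iff]
    refine ⟨by linarith, ?_⟩
    field_simp
  have h := ENNReal.lintegral_mul_le_Lp_mul_Lq (volume.restrict F) hconj
    (f := fun x => v x ^ (1 / (1 + p))) (g := fun x => σ x ^ (p / (1 + p)))
    (hv.pow_const _).aemeasurable (hσ.pow_const _).aemeasurable
  have h1 : ∫⁻ x in F, ((fun x => v x ^ (1 / (1 + p))) * fun x => σ x ^ (p / (1 + p))) x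
      = volume F := by
    rw [← setLIntegral_one]
    refine lintegral_congr_ae (ae_restrict_of_ae ?_)
    filter_upwards [hvσ] with x hx
    rw [Pi.mul_apply, show p / (1 + p) = p * (1 / (1 + p)) by ring, ENNReal.rpow_mul,
      ← ENNReal.mul_rpow_of_nonneg _ _ (by positivity), hx, ENNReal.one_rpow]
  have e1 : 1 / (1 + p) * (1 + p) = 1 := by field_simp
  have e2 : p / (1 + p) * ((1 + p) / p) = 1 := by field_simp
  rw [h1] at h
  simp only [← ENNReal.rpow_mul, e1, e2, ENNReal.rpow_one] at h
  calc volume F ^ (1 + p) ≤ _ := ENNReal.rpow_le_rpow h hp1.le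
    _ = _ := by
      rw [ENNReal.mul_rpow_of_nonneg _ _ hp1.le, ← ENNReal.rpow_mul, ← ENNReal.rpow_mul, e1,
        ENNReal.rpow_one]
      congr 2
      field_simp

/-- The `A_∞` condition: a subset of at most half the volume of a cube carries at most a fixed
fraction, less than `1`, of its `v`-mass. -/
lemma lintegral_subset_le (v σ : (Fin n → ℝ) → ℝ≥0∞) (hv : Measurable v) (hσ : Measurable σ) {p : ℝ}
    (hp : 0 < p) (hvσ : ∀ᵐ x, v x * σ x ^ p = 1) {C : ℝ≥0∞} {a : Fin n → ℝ} {s : ℝ}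
    (hs : 0 < s) (hC : av v a s * av σ a s ^ p ≤ C)
    (hfin : ∫⁻ x in cube a s, v x ≠ ⊤)
    (hσfin : ∫⁻ x in cube a s, σ x ≠ ⊤) (hσpos : ∫⁻ x in cube a s, σ x ≠ 0)
    (E : Set (Fin n → ℝ)) (hE : E ⊆ cube a s) (hEm : MeasurableSet E)
    (hhalf : 2 * volume E ≤ volume (cube a s)) :
    ∫⁻ x in E, v x ≤ (1 - (2 ^ (1 + p) * C)⁻¹) * ∫⁻ x in cube a s, v x := by
  have hp1 : 0 < 1 + p := by positivity
  set Q := cube a s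
  have hQ0 : volume Q ≠ 0 := volume_cube_ne_zero a hs
  have hQt : volume Q ≠ ⊤ := volume_cube_ne_top a s
  have hEt : volume E ≠ ⊤ := ne_top_of_le_ne_top hQt (measure_mono hE)
  have hF : volume Q ≤ 2 * volume (Q \ E) := by
    have h1 : volume Q = volume E + volume (Q \ E) := by
      rw [← measure_inter_add_sdiff Q hEm, inter_eq_self_of_subset_right hE]
    have h2 : volume E ≤ volume (Q \ E) := by
      rw [h1, two_mul] at hhalf
      exact (ENNReal.add_le_add_iff_left hEt).1 hhalf
    rw [h1, two_mul]
    gcongr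
  have hv1 : ∫⁻ x in Q, v x = av v a s * volume Q := (av_mul_volume v a hs).symm
  have hσ1 : ∫⁻ x in Q, σ x = av σ a s * volume Q := (av_mul_volume σ a hs).symm
  have hle : (∫⁻ x in Q, v x) * (∫⁻ x in Q, σ x) ^ p ≤
      (2 ^ (1 + p) * C * ∫⁻ x in Q \ E, v x) * (∫⁻ x in Q, σ x) ^ p := by
    calc (∫⁻ x in Q, v x) * (∫⁻ x in Q, σ x) ^ p
        = (av v a s * av σ a s ^ p) * volume Q ^ (1 + p) := by
          rw [hv1, hσ1, ENNReal.mul_rpow_of_nonneg _ _ hp.le,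
            ENNReal.rpow_add_of_nonneg _ _ zero_le_one hp.le, ENNReal.rpow_one]
          ring
      _ ≤ C * (2 * volume (Q \ E)) ^ (1 + p) := by gcongr
      _ = 2 ^ (1 + p) * C * volume (Q \ E) ^ (1 + p) := by
          rw [ENNReal.mul_rpow_of_nonneg _ _ hp1.le]; ring
      _ ≤ 2 ^ (1 + p) * C * ((∫⁻ x in Q \ E, v x) * (∫⁻ x in Q, σ x) ^ p) := by
          gcongr
          refine (volume_rpow_le v σ hv hσ hp hvσ (Q \ E)).trans ?_
          gcongr
          exact sdiff_subset
      _ = _ := by ring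
  have hle' : ∫⁻ x in Q, v x ≤ 2 ^ (1 + p) * C * ∫⁻ x in Q \ E, v x := by
    refine (ENNReal.mul_le_mul_iff_left ?_ ?_).1 hle
    · exact (ENNReal.rpow_pos (pos_iff_ne_zero.2 hσpos) hσfin).ne'
    · exact ENNReal.rpow_ne_top_of_nonneg hp.le hσfin
  have hFt : ∫⁻ x in Q \ E, v x ≠ ⊤ :=
    ne_top_of_le_ne_top hfin (lintegral_mono_set sdiff_subset)
  have hsplit : ∫⁻ x in Q, v x = (∫⁻ x in E, v x) + ∫⁻ x in Q \ E, v x := by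
    rw [← lintegral_inter_add_sdiff v Q hEm, inter_eq_self_of_subset_right hE]
  have hEeq : ∫⁻ x in E, v x = (∫⁻ x in Q, v x) - ∫⁻ x in Q \ E, v x := by
    rw [hsplit, ENNReal.add_sub_cancel_right hFt]
  rw [hEeq, ENNReal.sub_mul (fun _ _ => hfin), one_mul]
  gcongr
  rw [mul_comm, ← div_eq_mul_inv]
  exact ENNReal.div_le_of_le_mul' hle'

/-- With `N` such that `A * b ^ N < 1`, the exponent `δ = 1 / N` works. -/
lemma exists_exponent (A b : ℝ≥0∞) (hA : A ≠ ⊤) (hb : b < 1) : ∃ δ : ℝ, 0 < δ ∧ A ^ δ * b < 1 := by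
  have h := ENNReal.Tendsto.const_mul (a := A)
    (ENNReal.tendsto_pow_atTop_nhds_zero_of_lt_one hb) (Or.inr hA)
  rw [mul_zero] at h
  obtain ⟨N, hN, hN1⟩ := ((h.eventually_lt_const one_pos).and (Filter.eventually_ge_atTop 1)).exists
  have hN0 : (0 : ℝ) < N := by exact_mod_cast hN1
  refine ⟨1 / N, by positivity, ?_⟩
  have h2 := ENNReal.rpow_lt_one hN (z := 1 / (N : ℝ)) (by positivity)
  rwa [ENNReal.mul_rpow_of_nonneg _ _ (by positivity), ← ENNReal.rpow_natCast, ← ENNReal.rpow_mul,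
    mul_one_div_cancel hN0.ne', ENNReal.rpow_one] at h2

lemma lintegral_cube_ne_zero (v : (Fin n → ℝ) → ℝ≥0∞) (hv : Measurable v)
    (hv0 : ∀ᵐ x, v x ≠ 0) (a : Fin n → ℝ) {s : ℝ} (hs : 0 < s) : ∫⁻ x in cube a s, v x ≠ 0 := by
  intro h
  rw [lintegral_eq_zero_iff hv] at h
  have h2 : ∀ᵐ x ∂(volume.restrict (cube a s)), False := by
    filter_upwards [h, ae_restrict_of_ae hv0] with x hx hx0 using hx0 hx
  rw [Filter.eventually_false_iff_eq_bot, ae_eq_bot, Measure.restrict_eq_zero] at h2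
  exact volume_cube_ne_zero a hs h2

/-- Self-improvement for a pair of dual weights `v` and `σ = v ^ (-1 / p)`: the reverse Hölder
inequality applies to both of them with a common exponent. -/
lemma exists_improvement (v σ : (Fin n → ℝ) → ℝ≥0∞) (hv : Measurable v) (hσ : Measurable σ) {p : ℝ}
    (hp : 0 < p) (hvσ : ∀ᵐ x, v x * σ x ^ p = 1) {C : ℝ≥0∞} (hCt : C ≠ ⊤)
    (hC : ∀ (a : Fin n → ℝ) (s : ℝ), 0 < s → av v a s * av σ a s ^ p ≤ C) :
    ∃ δ : ℝ, 0 < δ ∧ ∃ C' : ℝ≥0∞, C' ≠ ⊤ ∧ ∀ (a : Fin n → ℝ) (s : ℝ), 0 < s →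
      av (fun x => v x ^ (1 + δ)) a s * av (fun x => σ x ^ (1 + δ)) a s ^ p ≤ C' := by
  have hσv : ∀ᵐ x, σ x * v x ^ p⁻¹ = 1 := by
    filter_upwards [hvσ] with x hx
    rw [← ENNReal.one_rpow p⁻¹, ← hx, ENNReal.mul_rpow_of_nonneg _ _ (by positivity),
      ENNReal.rpow_rpow_inv hp.ne', mul_comm]
  have hC2 : ∀ (a : Fin n → ℝ) (s : ℝ), 0 < s → av σ a s * av v a s ^ p⁻¹ ≤ C ^ p⁻¹ := by
    intro a s hs
    have h := ENNReal.rpow_le_rpow (hC a s hs) (z := p⁻¹) (by positivity)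
    rwa [ENNReal.mul_rpow_of_nonneg _ _ (by positivity), ENNReal.rpow_rpow_inv hp.ne', mul_comm] at h
  have hvpos : ∀ (a : Fin n → ℝ) (s : ℝ), 0 < s → ∫⁻ x in cube a s, v x ≠ 0 := fun a s hs => by
    refine lintegral_cube_ne_zero v hv ?_ a hs
    filter_upwards [hvσ] with x hx h0
    simp [h0] at hx
  have hσpos : ∀ (a : Fin n → ℝ) (s : ℝ), 0 < s → ∫⁻ x in cube a s, σ x ≠ 0 := fun a s hs => by
    refine lintegral_cube_ne_zero σ hσ ?_ a hs
    filter_upwards [hσv] with x hx h0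
    simp [h0] at hx
  -- Both masses are positive, so a finite `A_p` product forces both to be finite.
  have fin_aux : ∀ (f g : (Fin n → ℝ) → ℝ≥0∞) (r : ℝ) (D : ℝ≥0∞), 0 < r → D ≠ ⊤ →
      (∀ (a : Fin n → ℝ) (s : ℝ), 0 < s → ∫⁻ x in cube a s, g x ≠ 0) →
      (∀ (a : Fin n → ℝ) (s : ℝ), 0 < s → av f a s * av g a s ^ r ≤ D) →
      ∀ (a : Fin n → ℝ) (s : ℝ), 0 < s → ∫⁻ x in cube a s, f x ≠ ⊤ := by
    intro f g r D hr hD hg hfg a s hs h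
    have h1 : av f a s = ⊤ := by
      rw [av, h]; exact ENNReal.top_div_of_ne_top (volume_cube_ne_top a s)
    have h2 : av g a s ≠ 0 := (ENNReal.div_pos (hg a s hs) (volume_cube_ne_top _ _)).ne'
    have h3 : av g a s ^ r ≠ 0 := fun h => h2 ((ENNReal.rpow_eq_zero_iff_of_pos hr).1 h)
    have h4 := hfg a s hs
    rw [h1, ENNReal.top_mul h3, top_le_iff] at h4
    exact hD h4
  have hC2t : C ^ p⁻¹ ≠ ⊤ := ENNReal.rpow_ne_top_of_nonneg (by positivity) hCt
  have hvfin := fin_aux v σ p C hp hCt hσpos hC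
  have hσfin := fin_aux σ v p⁻¹ (C ^ p⁻¹) (by positivity) hC2t hvpos hC2
  have hb_lt : ∀ (r : ℝ) (D : ℝ≥0∞), 0 < r → D ≠ ⊤ → 1 - (2 ^ (1 + r) * D)⁻¹ < 1 := by
    intro r D hr hD
    refine ENNReal.sub_lt_self one_ne_top one_ne_zero (ENNReal.inv_ne_zero.2 ?_)
    exact ENNReal.mul_ne_top (ENNReal.rpow_ne_top_of_nonneg (by positivity) (by simp)) hD
  set b₁ := 1 - (2 ^ (1 + p) * C)⁻¹ with hb₁
  set b₂ := 1 - (2 ^ (1 + p⁻¹) * C ^ p⁻¹)⁻¹ with hb₂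
  obtain ⟨δ, hδ, hδb⟩ := exists_exponent (2 ^ n * 2) (max b₁ b₂) (by finiteness)
    (max_lt (hb_lt p C hp hCt) (hb_lt p⁻¹ _ (by positivity) hC2t))
  have hδ₁ : (2 ^ n * 2 : ℝ≥0∞) ^ δ * b₁ < 1 :=
    lt_of_le_of_lt (by gcongr; exact le_max_left _ _) hδb
  have hδ₂ : (2 ^ n * 2 : ℝ≥0∞) ^ δ * b₂ < 1 :=
    lt_of_le_of_lt (by gcongr; exact le_max_right _ _) hδb
  have R₁ := reverse_holder hδ.le v hv b₁ hδ₁ hvfin hvpos fun a s hs =>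
    lintegral_subset_le v σ hv hσ hp hvσ hs (hC a s hs) (hvfin a s hs) (hσfin a s hs) (hσpos a s hs)
  have R₂ := reverse_holder hδ.le σ hσ b₂ hδ₂ hσfin hσpos fun a s hs =>
    lintegral_subset_le σ v hσ hv (by positivity) hσv hs (hC2 a s hs) (hσfin a s hs)
      (hvfin a s hs) (hvpos a s hs)
  have hKt : ∀ b : ℝ≥0∞, (2 ^ n * 2) ^ δ * b < 1 →
      (2 : ℝ≥0∞) ^ δ * (1 - (2 ^ n * 2) ^ δ * b)⁻¹ ≠ ⊤ := fun b hb =>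
    ENNReal.mul_ne_top (ENNReal.rpow_ne_top_of_nonneg hδ.le (by simp))
      (ENNReal.inv_ne_top.2 (tsub_pos_of_lt hb).ne')
  have hK₁ := hKt b₁ hδ₁
  have hK₂ := hKt b₂ hδ₂
  set K₁ := (2 : ℝ≥0∞) ^ δ * (1 - (2 ^ n * 2) ^ δ * b₁)⁻¹
  set K₂ := (2 : ℝ≥0∞) ^ δ * (1 - (2 ^ n * 2) ^ δ * b₂)⁻¹
  refine ⟨δ, hδ, K₁ * K₂ ^ p * C ^ (1 + δ), ?_, fun a s hs => ?_⟩
  · exact ENNReal.mul_ne_top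
      (ENNReal.mul_ne_top hK₁ (ENNReal.rpow_ne_top_of_nonneg hp.le hK₂))
      (ENNReal.rpow_ne_top_of_nonneg (by positivity) hCt)
  · have hδ1 : 0 ≤ 1 + δ := by positivity
    calc _ ≤ (K₁ * av v a s ^ (1 + δ)) * (K₂ * av σ a s ^ (1 + δ)) ^ p :=
          mul_le_mul' (R₁ a s hs) (ENNReal.rpow_le_rpow (R₂ a s hs) hp.le)
      _ = K₁ * K₂ ^ p * (av v a s * av σ a s ^ p) ^ (1 + δ) := by
          rw [ENNReal.mul_rpow_of_nonneg _ _ hp.le, ENNReal.mul_rpow_of_nonneg _ _ hδ1,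
            ← ENNReal.rpow_mul, ← ENNReal.rpow_mul, mul_comm p]
          ring
      _ ≤ _ := by gcongr; exact hC a s hs

/-! ### Transfer to Euclidean space -/

lemma preimage_axisCube (c : EuclideanSpace ℝ (Fin n)) {r : ℝ} (hr : 0 < r) :
    WithLp.toLp 2 ⁻¹' axisCube c r = closedBall (WithLp.ofLp c) r := by
  ext y
  rw [closedBall_pi _ hr.le]
  simp [axisCube, Real.dist_eq]

/-- Averages over closed cubes in Euclidean space are averages over half-open cubes in `Fin n → ℝ`,
since the identification of the two spaces preserves volume. -/
lemma axisCube_average (f : EuclideanSpace ℝ (Fin n) → ℝ≥0∞) (c : EuclideanSpace ℝ (Fin n)) {r : ℝ}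
    (hr : 0 < r) :
    (volume (axisCube c r))⁻¹ * ∫⁻ x in axisCube c r, f x =
      av (fun y => f (WithLp.toLp 2 y)) (fun i => c i - r) (2 * r) := by
  have hmp := PiLp.volume_preserving_toLp (Fin n)
  have hemb : MeasurableEmbedding (@WithLp.toLp 2 (Fin n → ℝ)) :=
    (MeasurableEquiv.toLp 2 (Fin n → ℝ)).measurableEmbedding
  have hae := cube_ae_eq_closedBall (fun i => c i - r) (s := 2 * r) (by positivity)
  have hcen : (fun i => c i - r + 2 * r / 2) = WithLp.ofLp c := by ext i; ring
  rw [hcen, show 2 * r / 2 = r by ring, ← preimage_axisCube c hr] at hae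
  rw [av, setLIntegral_congr hae, measure_congr hae, hmp.setLIntegral_comp_preimage_emb hemb,
    hmp.measure_preimage_emb hemb, mul_comm, div_eq_mul_inv]

end Muckenhoupt

open Muckenhoupt in
/-- if `1 < q < ∞` and `w ∈ A_q(ℝⁿ)` is a weight, then there is
`α > 1` with `w^α ∈ A_q(ℝⁿ)`. -/
theorem muckenhoupt_power_improvement {n : ℕ} (q : ℝ) (hq : 1 < q)
    (w : EuclideanSpace ℝ (Fin n) → ℝ) (hw_meas : Measurable w)
    (hw_pos : ∀ᵐ x ∂volume, 0 < w x) (hw : MemAq q w) :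
    ∃ α : ℝ, 1 < α ∧ MemAq q (fun x => w x ^ α) := by
  obtain ⟨C, hCt, hC⟩ := hw
  have hp : 0 < q - 1 := by linarith
  have hmp := PiLp.volume_preserving_toLp (Fin n)
  have hpos : ∀ᵐ y : Fin n → ℝ, 0 < w (WithLp.toLp 2 y) :=
    hmp.quasiMeasurePreserving.ae hw_pos
  have hwm : Measurable fun y : Fin n → ℝ => w (WithLp.toLp 2 y) := hw_meas.comp hmp.measurable
  have hvσ : ∀ᵐ y : Fin n → ℝ, ENNReal.ofReal (w (WithLp.toLp 2 y)) *
      ENNReal.ofReal (w (WithLp.toLp 2 y) ^ (-(1 / (q - 1)))) ^ (q - 1) = 1 := by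
    filter_upwards [hpos] with y hy
    rw [ENNReal.ofReal_rpow_of_pos (by positivity), ← ENNReal.ofReal_mul hy.le, ← Real.rpow_mul hy.le,
      show -(1 / (q - 1)) * (q - 1) = -1 by field_simp, Real.rpow_neg_one,
      mul_inv_cancel₀ hy.ne', ENNReal.ofReal_one]
  obtain ⟨δ, hδ, C', hC't, hC'⟩ := exists_improvement _ _ hwm.ennreal_ofReal
    (hwm.pow_const (-(1 / (q - 1)))).ennreal_ofReal hp hvσ hCt (fun a s hs => by
      have h := hC (WithLp.toLp 2 fun i => a i + s / 2) (s / 2) (half_pos hs)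
      rw [axisCube_average _ _ (half_pos hs), axisCube_average _ _ (half_pos hs)] at h
      simpa [mul_div_cancel₀] using h)
  refine ⟨1 + δ, by linarith, C', hC't, fun c r hr => ?_⟩
  have h := hC' (fun i => c i - r) (2 * r) (by positivity)
  rw [axisCube_average _ _ hr, axisCube_average _ _ hr]
  refine le_of_eq_of_le ?_ h
  congr 1
  · simp only [av]
    congr 1
    refine lintegral_congr_ae (ae_restrict_of_ae ?_)
    filter_upwards [hpos] with y hy
    rw [ENNReal.ofReal_rpow_of_pos hy]
  · congr 1
    simp only [av]
    congr 1
    refine lintegral_congr_ae (ae_restrict_of_ae ?_)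
    filter_upwards [hpos] with y hy
    rw [ENNReal.ofReal_rpow_of_pos (by positivity), ← Real.rpow_mul hy.le, ← Real.rpow_mul hy.le,
      mul_comm]
end

section
/- Let 1 < q < ∞ and let w and a be weights on ℝⁿ with w ∈ A_q(ℝⁿ) and a^δ ∈ A_q(ℝⁿ) for some δ > 0 with δ < q − 1. Then there exists ε with 0 < ε < δ such that w·a^ε ∈ A_{q−ε}(ℝⁿ). -/
/-!
The proof combines Hölder's inequality with the reverse Hölder inequality for Muckenhoupt weights.

Write `s = q - 1`, let `V = w ^ (-1/s)` be the dual weight, and let all integrals be means over a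
cube. Both `w` and `V` satisfy Muckenhoupt conditions, so each satisfies a reverse Hölder inequality
(`reverse_holder`): `∫ w ^ (1 + γ) ≤ K (∫ w) ^ (1 + γ)`, and similarly for `V` with some `γ'`. With
`e = ε / δ` and `u = s / (s - ε)`, the two functions in the `A_{q-ε}` condition are
`w a ^ ε = w (a ^ δ) ^ e` and
`(w a ^ ε) ^ (-1 / (s - ε)) = V ^ u ((a ^ δ) ^ (-1/s)) ^ (e u)`.
For small `ε`, Hölder's inequality with `w ^ (1 + γ)`, respectively `V ^ (1 + γ')`, as first factor
bounds their means by constant multiples of `(∫ w) (∫ a ^ δ) ^ e` and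
`(∫ V) ^ u (∫ (a ^ δ) ^ (-1/s)) ^ (e u)`. Multiplying the first by the `(s - ε)`-th power of the
second gives the `A_q` product of `w` times the `e`-th power of the `A_q` product of `a ^ δ`, which
is bounded.

The reverse Hölder inequality rests on a Calderón–Zygmund decomposition (`calderon_zygmund`) of a
cube at twice the mean of the weight. The stopping cubes fill at most half of the cube, so by the
Muckenhoupt condition they carry at most a fixed fraction `1 - D⁻¹` of its weight
(`lintegral_le_of_half`). Consequently any bound `S` for the truncated integrals
`∫ min (W / mean) N ^ γ W`, relative to the weight of the cube and uniform over cubes, improves to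
`2 ^ γ + 2 ^ ((n + 1) γ) (1 - D⁻¹) S` (`truncInt_step`). For small `γ` the factor of `S` is below
`1`, and since the optimal `S` is finite it is bounded independently of the truncation level `N`.
-/

open MeasureTheory Metric Set ENNReal

/-! ### Dyadic cubes and the Calderón–Zygmund decomposition -/

/-- The half-open axis-parallel cube with lower corner `a` and edge length `L`. Half-open cubes are
used because they tile exactly under dyadic subdivision. -/
def hcube {n : ℕ} (a : Fin n → ℝ) (L : ℝ) : Set (Fin n → ℝ) :=
  Set.pi univ fun i => Ico (a i) (a i + L)

lemma measurableSet_hcube {n : ℕ} (a : Fin n → ℝ) (L : ℝ) : MeasurableSet (hcube a L) :=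
  MeasurableSet.univ_pi fun _ => measurableSet_Ico

lemma volume_hcube {n : ℕ} (a : Fin n → ℝ) (L : ℝ) :
    volume (hcube a L) = ENNReal.ofReal L ^ n := by
  simp [hcube, Real.volume_pi_Ico]

lemma volume_hcube_ne_zero {n : ℕ} (a : Fin n → ℝ) {L : ℝ} (hL : 0 < L) :
    volume (hcube a L) ≠ 0 := by
  rw [volume_hcube]; exact pow_ne_zero _ (by simpa using hL)

lemma volume_hcube_ne_top {n : ℕ} (a : Fin n → ℝ) (L : ℝ) :
    volume (hcube a L) ≠ ⊤ := by
  rw [volume_hcube]; finiteness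

lemma hcube_ae_eq_closedBall {n : ℕ} (a : Fin n → ℝ) {L : ℝ} (hL : 0 < L) :
    hcube a L =ᵐ[volume] closedBall (fun i => a i + L / 2) (L / 2) := by
  rw [closedBall_pi _ (by positivity)]
  have h : (Set.pi univ fun i => closedBall (a i + L / 2) (L / 2))
      = Icc a (fun i => a i + L) := by
    rw [← Set.pi_univ_Icc]
    congr 1
    ext1 i
    rw [Real.closedBall_eq_Icc]
    congr 1 <;> ring
  rw [h]
  exact Measure.univ_pi_Ico_ae_eq_Icc

/-- The dyadic subcube of generation `p.1` and integer position `p.2` in the grid generated by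
the cube with corner `a` and edge length `L`. -/
def gridCube {n : ℕ} (a : Fin n → ℝ) (L : ℝ) (p : ℕ × (Fin n → ℤ)) : Set (Fin n → ℝ) :=
  hcube (fun i => a i + L / 2 ^ p.1 * p.2 i) (L / 2 ^ p.1)

/-- The integer position of the grid cube of generation `k` that contains `x`. -/
noncomputable def gridIdx {n : ℕ} (a : Fin n → ℝ) (L : ℝ) (k : ℕ) (x : Fin n → ℝ) : Fin n → ℤ :=
  fun i => ⌊(x i - a i) / (L / 2 ^ k)⌋

lemma mem_gridCube {n : ℕ} {a : Fin n → ℝ} {L : ℝ} (hL : 0 < L) {k : ℕ} {m : Fin n → ℤ}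
    {x : Fin n → ℝ} : x ∈ gridCube a L (k, m) ↔ gridIdx a L k x = m := by
  have h : 0 < L / 2 ^ k := by positivity
  simp only [gridCube, hcube, Set.mem_pi, mem_univ, true_imp_iff, funext_iff, gridIdx,
    Int.floor_eq_iff, mem_Ico, le_div_iff₀ h, div_lt_iff₀ h]
  refine forall_congr' fun i => and_congr ?_ ?_
  · constructor <;> intro h <;> linarith
  · constructor <;> intro h <;> linarith

lemma gridIdx_succ {n : ℕ} (a : Fin n → ℝ) (L : ℝ) (k : ℕ) (x : Fin n → ℝ) (i : Fin n) :
    gridIdx a L k x i = gridIdx a L (k + 1) x i / 2 := by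
  have := Int.floor_div_natCast ((x i - a i) / (L / 2 ^ (k + 1))) 2
  simp only [gridIdx]
  push_cast at this
  rw [← this]
  congr 1
  rw [pow_succ]
  by_cases hL : L = 0
  · simp [hL]
  · field_simp

/-- The position at a fine scale determines the position at every coarser scale. -/
lemma gridIdx_congr {n : ℕ} (a : Fin n → ℝ) (L : ℝ) {k : ℕ} {x y : Fin n → ℝ}
    (h : gridIdx a L k x = gridIdx a L k y) {j : ℕ} (hj : j ≤ k) :
    gridIdx a L j x = gridIdx a L j y := by
  induction k, hj using Nat.le_induction with
  | base => exact h
  | succ k _ ih =>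
    apply ih
    ext i
    rw [gridIdx_succ a L k x, gridIdx_succ a L k y, h]

lemma gridCube_zero {n : ℕ} (a : Fin n → ℝ) (L : ℝ) : gridCube a L (0, 0) = hcube a L := by
  simp [gridCube]

/-- Lebesgue differentiation along the nested grid cubes containing a point. -/
lemma ae_tendsto_grid {n : ℕ} {f : (Fin n → ℝ) → ℝ≥0∞} (hf : Measurable f)
    (hfi : ∫⁻ x, f x ≠ ⊤) (a : Fin n → ℝ) {L : ℝ} (hL : 0 < L) :
    ∀ᵐ x, Filter.Tendsto (fun k : ℕ => (∫⁻ y in gridCube a L (k, gridIdx a L k x), f y) /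
      volume (gridCube a L (k, gridIdx a L k x))) Filter.atTop (nhds (f x)) := by
  filter_upwards [(IsUnifLocDoublingMeasure.vitaliFamily
    (volume : Measure (Fin n → ℝ)) 1).ae_tendsto_lintegral_div hf.aemeasurable hfi] with x hx
  have key := hx.comp (IsUnifLocDoublingMeasure.tendsto_closedBall_filterAt volume (K := 1)
    (l := Filter.atTop) (x := x)
    (fun (k : ℕ) i => (a i + L / 2 ^ k * gridIdx a L k x i) + (L / 2 ^ k) / 2)
    (fun k : ℕ => (L / 2 ^ k) / 2) ?_ ?_)
  · refine key.congr fun k => ?_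
    have h : 0 < L / 2 ^ k := by positivity
    have := hcube_ae_eq_closedBall (fun i => a i + L / 2 ^ k * gridIdx a L k x i) h
    simp only [Function.comp_apply, gridCube]
    rw [setLIntegral_congr this, measure_congr this]
  · rw [tendsto_nhdsWithin_iff]
    refine ⟨?_, Filter.Eventually.of_forall fun k => ?_⟩
    · have h2 := (tendsto_pow_atTop_nhds_zero_of_lt_one (r := (1/2 : ℝ)) (by norm_num)
        (by norm_num)).const_mul (L / 2)
      rw [mul_zero] at h2
      refine h2.congr fun k => ?_
      rw [one_div, inv_pow]; ring
    · simp only [mem_Ioi]; positivity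
  · refine Filter.Eventually.of_forall fun k => ?_
    have h : 0 < L / 2 ^ k := by positivity
    have hx : x ∈ gridCube a L (k, gridIdx a L k x) := (mem_gridCube hL).2 rfl
    rw [one_mul, closedBall_pi _ (by positivity)]
    intro i _
    have := hx i (mem_univ i)
    simp only [Real.closedBall_eq_Icc, mem_Icc, mem_Ico] at this ⊢
    constructor <;> linarith

/-- **Calderón–Zygmund decomposition** of a cube `Q` at a height `t` at least the mean of `W`
over `Q`: the maximal dyadic subcubes over which the mean exceeds `t` are disjoint, their means are
at most `2 ^ n * t`, and `W ≤ t` almost everywhere off their union. -/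
lemma calderon_zygmund {n : ℕ} {W : (Fin n → ℝ) → ℝ≥0∞} (hW : Measurable W)
    (a : Fin n → ℝ) {L : ℝ} (hL : 0 < L) (hfin : ∫⁻ x in hcube a L, W x ≠ ⊤) (t : ℝ≥0∞)
    (ht : ∫⁻ x in hcube a L, W x ≤ t * volume (hcube a L)) :
    ∃ J : Set (ℕ × (Fin n → ℤ)),
      (∀ p ∈ J, gridCube a L p ⊆ hcube a L) ∧
      (∀ p ∈ J, t * volume (gridCube a L p) ≤ ∫⁻ x in gridCube a L p, W x) ∧
      (∀ p ∈ J, ∫⁻ x in gridCube a L p, W x ≤ 2 ^ n * t * volume (gridCube a L p)) ∧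
      J.PairwiseDisjoint (gridCube a L) ∧
      ∀ᵐ x, x ∈ hcube a L → x ∉ ⋃ p ∈ J, gridCube a L p → W x ≤ t := by
  set P : ℕ × (Fin n → ℤ) → Prop := fun p =>
    t * volume (gridCube a L p) < ∫⁻ x in gridCube a L p, W x with hP
  have hsub : ∀ k x, x ∈ hcube a L → gridCube a L (k, gridIdx a L k x) ⊆ hcube a L := by
    intro k x hx y hy
    rw [← gridCube_zero, mem_gridCube hL] at hx ⊢
    rw [mem_gridCube hL] at hy
    rw [gridIdx_congr a L hy (Nat.zero_le k), hx]
  refine ⟨{p | P p ∧ ∃ x ∈ hcube a L, gridIdx a L p.1 x = p.2 ∧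
    ∀ j < p.1, ¬ P (j, gridIdx a L j x)}, ?_, ?_, ?_, ?_, ?_⟩
  · rintro ⟨k, m⟩ ⟨-, x, hx, hm, -⟩
    obtain rfl : gridIdx a L k x = m := hm
    exact hsub k x hx
  · rintro p ⟨hp, -⟩
    exact hp.le
  · rintro ⟨k, m⟩ ⟨hp, x, hx, hm, hj⟩
    obtain rfl : gridIdx a L k x = m := hm
    rcases k with _ | k
    · -- the cube itself does not satisfy the stopping condition
      exfalso
      rw [← gridCube_zero, mem_gridCube hL] at hx
      simp only [hx, hP, gridCube_zero] at hp
      exact absurd ht (not_le.2 hp)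
    · have h1 := hj k (Nat.lt_succ_self k)
      simp only [hP, not_lt] at h1
      refine (lintegral_mono_set ?_).trans (h1.trans (le_of_eq ?_))
      · intro y hy
        rw [mem_gridCube hL] at hy ⊢
        exact gridIdx_congr a L hy (Nat.le_succ k)
      · simp only [gridCube, volume_hcube]
        have : L / 2 ^ k = 2 * (L / 2 ^ (k + 1)) := by rw [pow_succ]; field_simp
        rw [this, ENNReal.ofReal_mul (by norm_num), mul_pow]
        simp only [ENNReal.ofReal_ofNat]
        ring
  · rintro ⟨k, m⟩ ⟨hp, x, hx, hxm, hj⟩ ⟨k', m'⟩ ⟨hp', x', hx', hxm', hj'⟩ hne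
    simp only at hxm hxm' hj hj'
    refine Set.disjoint_left.2 fun y hy hy' => hne ?_
    rw [mem_gridCube hL] at hy hy'
    have hxy : gridIdx a L k x = gridIdx a L k y := hxm.trans hy.symm
    have hxy' : gridIdx a L k' x' = gridIdx a L k' y := hxm'.trans hy'.symm
    rcases lt_trichotomy k k' with h | h | h
    · exfalso
      apply hj' k h
      rw [gridIdx_congr a L hxy' h.le, hy]
      exact hp
    · subst h
      rw [← hy, hy']
    · exfalso
      apply hj k' h
      rw [gridIdx_congr a L hxy h.le, hy']
      exact hp'
  · have hm := measurableSet_hcube a L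
    have hleb := ae_tendsto_grid (hW.indicator hm)
      (by rwa [lintegral_indicator hm]) a hL
    filter_upwards [hleb] with x hx hxQ hxU
    have hnot : ∀ k, ¬ P (k, gridIdx a L k x) := by
      by_contra! hcon
      classical
      apply hxU
      simp only [mem_iUnion]
      exact ⟨(Nat.find hcon, gridIdx a L (Nat.find hcon) x),
        ⟨Nat.find_spec hcon, x, hxQ, rfl, fun j hj => Nat.find_min hcon hj⟩,
        (mem_gridCube hL).2 rfl⟩
    rw [Set.indicator_of_mem hxQ] at hx
    refine le_of_tendsto' hx fun k => ?_
    refine ENNReal.div_le_of_le_mul ?_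
    have := hnot k
    simp only [hP, not_lt] at this
    exact (lintegral_mono fun y => Set.indicator_le_self _ _ _).trans this

/-! ### The reverse Hölder inequality -/

/-- Hölder's inequality for `1 = W ^ (1/(s+1)) * W ^ (-1/(s+1))`. -/
lemma measure_pow_le_lintegral {X : Type*} [MeasurableSpace X] {μ : Measure X} {W : X → ℝ≥0∞}
    (hW : Measurable W) (hW0 : ∀ᵐ x ∂μ, W x ≠ 0) (hWt : ∀ᵐ x ∂μ, W x ≠ ⊤) {s : ℝ} (hs : 0 < s) :
    (μ univ) ^ (s + 1) ≤ (∫⁻ x, W x ∂μ) * (∫⁻ x, W x ^ (-(1 / s)) ∂μ) ^ s := by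
  have h1 : μ univ ≤ (∫⁻ x, W x ∂μ) ^ (1 / (s + 1)) *
      (∫⁻ x, W x ^ (-(1 / s)) ∂μ) ^ (s / (s + 1)) := by
    refine le_trans (le_of_eq ?_) (ENNReal.lintegral_mul_norm_pow_le hW.aemeasurable
      (hW.pow_const _).aemeasurable (p := 1 / (s + 1)) (q := s / (s + 1))
      (by positivity) (by positivity) (by field_simp; ring))
    rw [← lintegral_one]
    refine lintegral_congr_ae ?_
    filter_upwards [hW0, hWt] with x h0 ht
    rw [← ENNReal.rpow_mul, ← ENNReal.rpow_add _ _ h0 ht]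
    have : 1 / (s + 1) + -(1 / s) * (s / (s + 1)) = 0 := by field_simp; ring
    rw [this, ENNReal.rpow_zero]
  refine (ENNReal.rpow_le_rpow h1 (by positivity : 0 ≤ s + 1)).trans (le_of_eq ?_)
  rw [ENNReal.mul_rpow_of_nonneg _ _ (by positivity), ← ENNReal.rpow_mul, ← ENNReal.rpow_mul]
  congr 2
  · rw [one_div_mul_cancel (by positivity), ENNReal.rpow_one]
  · field_simp

/-- The `A_∞` property of an `A_{s+1}` weight: a subset of at least half the measure of the cube
carries at least a fixed fraction of its weight. -/
lemma lintegral_le_of_half {X : Type*} [MeasurableSpace X] {μ : Measure X} {W : X → ℝ≥0∞}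
    (hW : Measurable W) (hW0 : ∀ᵐ x ∂μ, W x ≠ 0) (hWt : ∀ᵐ x ∂μ, W x ≠ ⊤) {s : ℝ} (hs : 0 < s)
    {C : ℝ≥0∞} {Q E : Set X} (hEQ : E ⊆ Q)
    (hQ0 : μ Q ≠ 0) (hQt : μ Q ≠ ⊤) (hE : μ Q ≤ 2 * μ E)
    (hA : (∫⁻ x in Q, W x ∂μ) * (∫⁻ x in Q, W x ^ (-(1 / s)) ∂μ) ^ s ≤ C * μ Q ^ (s + 1)) :
    ∫⁻ x in Q, W x ∂μ ≤ 2 ^ (s + 1) * C * ∫⁻ x in E, W x ∂μ := by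
  have h1 := measure_pow_le_lintegral (μ := μ.restrict E) hW (ae_restrict_of_ae hW0)
    (ae_restrict_of_ae hWt) hs
  rw [Measure.restrict_apply_univ] at h1
  have h2 : μ Q ^ (s + 1) ≠ 0 := by simp [hQ0, hQt]
  have h3 : μ Q ^ (s + 1) ≠ ⊤ := by simp [hQ0, hQt]
  refine (ENNReal.mul_le_mul_iff_right h2 h3).1 ?_
  calc μ Q ^ (s + 1) * ∫⁻ x in Q, W x ∂μ
      ≤ (2 * μ E) ^ (s + 1) * ∫⁻ x in Q, W x ∂μ := by gcongr
    _ = 2 ^ (s + 1) * (μ E ^ (s + 1)) * ∫⁻ x in Q, W x ∂μ := by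
        rw [ENNReal.mul_rpow_of_nonneg _ _ (by positivity)]
    _ ≤ 2 ^ (s + 1) * ((∫⁻ x in E, W x ∂μ) * (∫⁻ x in Q, W x ^ (-(1 / s)) ∂μ) ^ s) *
          ∫⁻ x in Q, W x ∂μ := by
        gcongr
        exact h1.trans (by gcongr)
    _ = 2 ^ (s + 1) * (∫⁻ x in E, W x ∂μ) *
          ((∫⁻ x in Q, W x ∂μ) * (∫⁻ x in Q, W x ^ (-(1 / s)) ∂μ) ^ s) := by ring
    _ ≤ 2 ^ (s + 1) * (∫⁻ x in E, W x ∂μ) * (C * μ Q ^ (s + 1)) := by gcongr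
    _ = _ := by ring

/-- Both integrals in an `A_{s+1}` condition being positive, the weight has positive finite mass on
every cube. -/
lemma lintegral_ne_zero_ne_top {X : Type*} [MeasurableSpace X] {μ : Measure X} {W : X → ℝ≥0∞}
    (hW : Measurable W) (hW0 : ∀ᵐ x ∂μ, W x ≠ 0) (hWt : ∀ᵐ x ∂μ, W x ≠ ⊤) {s : ℝ} (hs : 0 < s)
    {C : ℝ≥0∞} (hC : C ≠ ⊤) {Q : Set X} (hQ0 : μ Q ≠ 0) (hQt : μ Q ≠ ⊤)
    (hA : (∫⁻ x in Q, W x ∂μ) * (∫⁻ x in Q, W x ^ (-(1 / s)) ∂μ) ^ s ≤ C * μ Q ^ (s + 1)) :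
    ∫⁻ x in Q, W x ∂μ ≠ 0 ∧ ∫⁻ x in Q, W x ∂μ ≠ ⊤ := by
  have key : ∀ f : X → ℝ≥0∞, Measurable f → (∀ᵐ x ∂μ, f x ≠ 0) → ∫⁻ x in Q, f x ∂μ ≠ 0 := by
    intro f hf hf0 h
    rw [lintegral_eq_zero_iff hf] at h
    have : ∀ᵐ x ∂(μ.restrict Q), False := by
      filter_upwards [h, ae_restrict_of_ae hf0] with x h1 h2 using h2 h1
    simp [hQ0] at this
  refine ⟨key W hW hW0, fun h => ?_⟩
  have hV : ∫⁻ x in Q, W x ^ (-(1 / s)) ∂μ ≠ 0 := by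
    refine key _ (hW.pow_const _) ?_
    filter_upwards [hW0, hWt] with x h0 ht
    simp [h0, ht]
  rw [h, ENNReal.top_mul ((ENNReal.rpow_eq_zero_iff_of_pos hs).not.2 hV), top_le_iff] at hA
  exact ENNReal.mul_ne_top hC (ENNReal.rpow_ne_top_of_nonneg (by positivity) hQt) hA

/-- The truncated integral controlled by the reverse Hölder inequality: the integral over the cube
of `min (W / m) N ^ γ * W`, where `m` is the mean of `W` over the cube. -/
noncomputable def truncInt {n : ℕ} (W : (Fin n → ℝ) → ℝ≥0∞) (γ : ℝ) (N : ℝ≥0∞)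
    (a : Fin n → ℝ) (L : ℝ) : ℝ≥0∞ :=
  ∫⁻ x in hcube a L,
    min (W x / ((∫⁻ y in hcube a L, W y) / volume (hcube a L))) N ^ γ * W x

/-- One Calderón–Zygmund step: a bound `S` for the truncated integrals on all cubes
self-improves, because the stopping cubes carry at most the fraction `1 - D⁻¹` of the weight. -/
lemma truncInt_step {n : ℕ} {W : (Fin n → ℝ) → ℝ≥0∞}
    (hW : Measurable W) (hW0 : ∀ᵐ x, W x ≠ 0) (hWt : ∀ᵐ x, W x ≠ ⊤) {s : ℝ} (hs : 0 < s)
    {C : ℝ≥0∞} (hC : C ≠ ⊤)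
    (hA : ∀ (a : Fin n → ℝ) (L : ℝ), 0 < L →
      (∫⁻ x in hcube a L, W x) * (∫⁻ x in hcube a L, W x ^ (-(1 / s))) ^ s
        ≤ C * volume (hcube a L) ^ (s + 1))
    {D : ℝ≥0∞} (hD : 2 ^ (s + 1) * C ≤ D) (hD0 : D ≠ 0) (hDt : D ≠ ⊤)
    {γ : ℝ} (hγ : 0 ≤ γ) {N S : ℝ≥0∞}
    (hS : ∀ (a : Fin n → ℝ) (L : ℝ), 0 < L → truncInt W γ N a L ≤ S * ∫⁻ x in hcube a L, W x)
    (a : Fin n → ℝ) {L : ℝ} (hL : 0 < L) :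
    truncInt W γ N a L
      ≤ (2 ^ γ + (2 ^ (n + 1)) ^ γ * (1 - D⁻¹) * S) * ∫⁻ x in hcube a L, W x := by
  have hv0 := volume_hcube_ne_zero a hL
  have hvt := volume_hcube_ne_top a L
  obtain ⟨hI0, hIt⟩ := lintegral_ne_zero_ne_top hW hW0 hWt hs hC hv0 hvt (hA a L hL)
  unfold truncInt
  set I := ∫⁻ x in hcube a L, W x with hI
  set v := volume (hcube a L) with hv
  set m := I / v with hm
  have hm0 : m ≠ 0 := ENNReal.div_ne_zero.2 ⟨hI0, hvt⟩
  have hmt : m ≠ ⊤ := ENNReal.div_ne_top hIt hv0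
  have hmv : m * v = I := ENNReal.div_mul_cancel hv0 hvt
  obtain ⟨J, hJsub, hJlow, hJup, hJdisj, hJae⟩ := calderon_zygmund hW a hL hIt (2 * m) (by
    rw [mul_assoc, ← hv, hmv, two_mul]; exact le_self_add)
  have hJc : J.Countable := J.to_countable
  have hmeas : ∀ p ∈ J, MeasurableSet (gridCube a L p) := fun p _ => measurableSet_hcube _ _
  set U := ⋃ p ∈ J, gridCube a L p with hU
  have hUm : MeasurableSet U := MeasurableSet.biUnion hJc hmeas
  have hUQ : U ⊆ hcube a L := iUnion₂_subset hJsub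
  have hsplit : ∀ f : (Fin n → ℝ) → ℝ≥0∞, ∫⁻ x in hcube a L, f x
      = (∫⁻ x in U, f x) + ∫⁻ x in hcube a L \ U, f x := by
    intro f
    rw [← lintegral_inter_add_sdiff f (hcube a L) hUm, inter_eq_self_of_subset_right hUQ]
  have hUsum : ∀ f : (Fin n → ℝ) → ℝ≥0∞,
      ∫⁻ x in U, f x = ∑' p : J, ∫⁻ x in gridCube a L p, f x :=
    fun f => lintegral_biUnion hJc hmeas hJdisj f
  -- The stopping cubes fill at most half of the cube.
  have hhalf : 2 * volume U ≤ v := by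
    have h1 : 2 * m * volume U ≤ I := by
      calc 2 * m * volume U = ∑' p : J, 2 * m * volume (gridCube a L p) := by
            rw [measure_biUnion hJc hJdisj hmeas, ENNReal.tsum_mul_left]
        _ ≤ ∑' p : J, ∫⁻ x in gridCube a L p, W x :=
            ENNReal.tsum_le_tsum fun p => hJlow p p.2
        _ = ∫⁻ x in U, W x := (hUsum W).symm
        _ ≤ I := lintegral_mono_set hUQ
    refine (ENNReal.mul_le_mul_iff_right hm0 hmt).1 ?_
    rw [hmv]
    refine le_trans (le_of_eq ?_) h1
    ring
  have hE : v ≤ 2 * volume (hcube a L \ U) := by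
    have h1 : v = volume U + volume (hcube a L \ U) := by
      have := hsplit (fun _ => 1)
      simpa only [setLIntegral_one] using this
    have h2 : v + v ≤ v + 2 * volume (hcube a L \ U) := by
      calc v + v = 2 * volume U + 2 * volume (hcube a L \ U) := by
            rw [← mul_add, ← h1, two_mul]
        _ ≤ _ := by gcongr
    exact (ENNReal.add_le_add_iff_left hvt).1 h2
  -- Hence they carry at most the fraction `1 - D⁻¹` of the weight.
  have hIU : ∫⁻ x in U, W x ≤ (1 - D⁻¹) * I := by
    have h1 : I ≤ D * ∫⁻ x in hcube a L \ U, W x :=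
      (lintegral_le_of_half hW hW0 hWt hs sdiff_subset hv0 hvt hE (hA a L hL)).trans (by gcongr)
    have h2 : D⁻¹ * I ≤ ∫⁻ x in hcube a L \ U, W x := by
      calc D⁻¹ * I ≤ D⁻¹ * (D * ∫⁻ x in hcube a L \ U, W x) := by gcongr
        _ = _ := by rw [← mul_assoc, ENNReal.inv_mul_cancel hD0 hDt, one_mul]
    rw [ENNReal.sub_mul (fun _ _ => hIt), one_mul]
    refine ENNReal.le_sub_of_add_le_right
      (ENNReal.mul_ne_top (ENNReal.inv_ne_top.2 hD0) hIt) ?_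
    calc _ ≤ (∫⁻ x in U, W x) + ∫⁻ x in hcube a L \ U, W x := by gcongr
      _ = I := (hsplit W).symm
  rw [hsplit, add_comm, add_mul]
  refine add_le_add ?_ ?_
  · calc ∫⁻ x in hcube a L \ U, min (W x / m) N ^ γ * W x
        ≤ ∫⁻ x in hcube a L \ U, 2 ^ γ * W x := by
          refine setLIntegral_mono_ae (by fun_prop) ?_
          filter_upwards [hJae] with x hx hxE
          gcongr
          exact (min_le_left _ _).trans (ENNReal.div_le_of_le_mul (hx hxE.1 hxE.2))
      _ = 2 ^ γ * ∫⁻ x in hcube a L \ U, W x := lintegral_const_mul _ hW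
      _ ≤ 2 ^ γ * I := by gcongr; exact lintegral_mono_set sdiff_subset
  · have hone : ∀ p : J, ∫⁻ x in gridCube a L p, min (W x / m) N ^ γ * W x
        ≤ (2 ^ (n + 1)) ^ γ * S * ∫⁻ x in gridCube a L p, W x := by
      intro p
      have hLp : 0 < L / 2 ^ (p : ℕ × (Fin n → ℤ)).1 := by positivity
      have hvp0 : volume (gridCube a L p) ≠ 0 := volume_hcube_ne_zero _ hLp
      have hvpt : volume (gridCube a L p) ≠ ⊤ := volume_hcube_ne_top _ _
      have hIp := lintegral_ne_zero_ne_top (Q := gridCube a L p) hW hW0 hWt hs hC hvp0 hvpt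
        (hA _ _ hLp)
      set mp := (∫⁻ y in gridCube a L p, W y) / volume (gridCube a L p) with hmp
      have hmp0 : mp ≠ 0 := ENNReal.div_ne_zero.2 ⟨hIp.1, hvpt⟩
      have hmpt : mp ≠ ⊤ := ENNReal.div_ne_top hIp.2 hvp0
      have hmm : mp ≤ 2 ^ (n + 1) * m := by
        refine ENNReal.div_le_of_le_mul ((hJup p p.2).trans (le_of_eq ?_))
        ring
      have hpt : ∀ x, min (W x / m) N ≤ 2 ^ (n + 1) * min (W x / mp) N := by
        intro x
        have h1 : W x / m ≤ 2 ^ (n + 1) * (W x / mp) := by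
          refine ENNReal.div_le_of_le_mul ?_
          calc W x = W x / mp * mp := (ENNReal.div_mul_cancel hmp0 hmpt).symm
            _ ≤ W x / mp * (2 ^ (n + 1) * m) := by gcongr
            _ = _ := by ring
        have h2 : N ≤ 2 ^ (n + 1) * N := by
          refine le_mul_of_one_le_left zero_le ?_
          exact one_le_pow₀ (by norm_num)
        rcases le_total (W x / mp) N with h | h
        · rw [min_eq_left h]; exact (min_le_left _ _).trans h1
        · rw [min_eq_right h]; exact (min_le_right _ _).trans h2
      calc ∫⁻ x in gridCube a L p, min (W x / m) N ^ γ * W x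
          ≤ ∫⁻ x in gridCube a L p, (2 ^ (n + 1)) ^ γ * (min (W x / mp) N ^ γ * W x) := by
            refine lintegral_mono fun x => ?_
            rw [← mul_assoc, ← ENNReal.mul_rpow_of_nonneg _ _ hγ]
            gcongr
            exact hpt x
        _ = (2 ^ (n + 1)) ^ γ * ∫⁻ x in gridCube a L p, min (W x / mp) N ^ γ * W x :=
            lintegral_const_mul _ (by fun_prop)
        _ ≤ (2 ^ (n + 1)) ^ γ * (S * ∫⁻ x in gridCube a L p, W x) := by
            gcongr
            exact hS _ _ hLp
        _ = _ := by ring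
    calc ∫⁻ x in U, min (W x / m) N ^ γ * W x
        = ∑' p : J, ∫⁻ x in gridCube a L p, min (W x / m) N ^ γ * W x := hUsum _
      _ ≤ ∑' p : J, (2 ^ (n + 1)) ^ γ * S * ∫⁻ x in gridCube a L p, W x :=
          ENNReal.tsum_le_tsum hone
      _ = (2 ^ (n + 1)) ^ γ * S * ∫⁻ x in U, W x := by rw [ENNReal.tsum_mul_left, hUsum]
      _ ≤ (2 ^ (n + 1)) ^ γ * S * ((1 - D⁻¹) * I) := by gcongr
      _ = _ := by ring

lemma exists_rpow_mul_lt_one (b : ℕ) {ρ : ℝ≥0∞} (hρ : ρ < 1) :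
    ∃ γ : ℝ, 0 < γ ∧ ((2 : ℝ≥0∞) ^ b) ^ γ * ρ < 1 := by
  have hρt : ρ ≠ ⊤ := hρ.ne_top
  have hr : ρ.toReal < 1 := by
    rw [← ENNReal.toReal_one]; exact (ENNReal.toReal_lt_toReal hρt (by simp)).2 hρ
  have hcont : Filter.Tendsto (fun γ : ℝ => ((2 : ℝ) ^ b) ^ γ * ρ.toReal) (nhds 0)
      (nhds (((2 : ℝ) ^ b) ^ (0 : ℝ) * ρ.toReal)) :=
    ((Real.continuous_const_rpow (by positivity)).mul continuous_const).tendsto 0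
  rw [Real.rpow_zero, one_mul] at hcont
  have hev := (hcont.eventually_lt_const hr).filter_mono nhdsWithin_le_nhds
    |>.and (self_mem_nhdsWithin (s := Ioi (0 : ℝ)))
  obtain ⟨γ, h1, h2⟩ := hev.exists
  refine ⟨γ, h2, ?_⟩
  have : ((2 : ℝ≥0∞) ^ b) ^ γ * ρ = ENNReal.ofReal (((2 : ℝ) ^ b) ^ γ * ρ.toReal) := by
    rw [ENNReal.ofReal_mul (by positivity), ENNReal.ofReal_toReal hρt,
      ← ENNReal.ofReal_rpow_of_pos (by positivity), ENNReal.ofReal_pow (by norm_num)]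
    simp
  rw [this]
  simpa using h1

/-- **Reverse Hölder inequality** for `A_{s+1}` weights. The truncated integrals are finite with a
bound depending on the truncation; absorbing in `truncInt_step` makes the bound uniform. -/
theorem reverse_holder {n : ℕ} {W : (Fin n → ℝ) → ℝ≥0∞}
    (hW : Measurable W) (hW0 : ∀ᵐ x, W x ≠ 0) (hWt : ∀ᵐ x, W x ≠ ⊤) {s : ℝ} (hs : 0 < s)
    {C : ℝ≥0∞} (hC : C ≠ ⊤)
    (hA : ∀ (a : Fin n → ℝ) (L : ℝ), 0 < L →
      (∫⁻ x in hcube a L, W x) * (∫⁻ x in hcube a L, W x ^ (-(1 / s))) ^ s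
        ≤ C * volume (hcube a L) ^ (s + 1)) :
    ∃ γ : ℝ, 0 < γ ∧ ∃ K : ℝ≥0∞, K ≠ ⊤ ∧ ∀ (a : Fin n → ℝ) (L : ℝ), 0 < L →
      (volume (hcube a L))⁻¹ * ∫⁻ x in hcube a L, W x ^ (1 + γ)
        ≤ K * ((volume (hcube a L))⁻¹ * ∫⁻ x in hcube a L, W x) ^ (1 + γ) := by
  set D : ℝ≥0∞ := 2 ^ (s + 1) * C + 1 with hDdef
  have hD0 : D ≠ 0 := by simp [hDdef]
  have hDt : D ≠ ⊤ := ENNReal.add_ne_top.2 ⟨ENNReal.mul_ne_top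
    (ENNReal.rpow_ne_top_of_nonneg (by positivity) (by simp)) hC, by simp⟩
  have hρ0 : 1 - D⁻¹ < 1 := ENNReal.sub_lt_self (by simp) (by simp) (ENNReal.inv_ne_zero.2 hDt)
  obtain ⟨γ, hγ, hργ⟩ := exists_rpow_mul_lt_one (n + 1) hρ0
  set ρ := ((2 : ℝ≥0∞) ^ (n + 1)) ^ γ * (1 - D⁻¹) with hρ
  set K : ℝ≥0∞ := 2 ^ γ / (1 - ρ) with hK
  have h1ρ : 1 - ρ ≠ 0 := (tsub_pos_of_lt hργ).ne'
  have hKt : K ≠ ⊤ :=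
    ENNReal.div_ne_top (ENNReal.rpow_ne_top_of_nonneg hγ.le (by simp)) h1ρ
  have hIpos := fun (a : Fin n → ℝ) (L : ℝ) (hL : 0 < L) =>
    lintegral_ne_zero_ne_top hW hW0 hWt hs hC (volume_hcube_ne_zero a hL)
      (volume_hcube_ne_top a L) (hA a L hL)
  -- The bound for the truncated integrals, uniform in the truncation level.
  have hbound : ∀ (N : ℕ) (a : Fin n → ℝ) (L : ℝ), 0 < L →
      truncInt W γ N a L ≤ K * ∫⁻ x in hcube a L, W x := by
    intro N
    set S : ℝ≥0∞ := ⨆ (a : Fin n → ℝ) (L : ℝ) (_ : 0 < L),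
      truncInt W γ N a L / ∫⁻ x in hcube a L, W x with hSdef
    have hS : ∀ (a : Fin n → ℝ) (L : ℝ), 0 < L →
        truncInt W γ N a L ≤ S * ∫⁻ x in hcube a L, W x := by
      intro a L hL
      rw [← ENNReal.div_le_iff (hIpos a L hL).1 (hIpos a L hL).2]
      exact le_iSup₂_of_le a L (le_iSup_of_le hL le_rfl)
    have hSle : ∀ T : ℝ≥0∞, (∀ (a : Fin n → ℝ) (L : ℝ), 0 < L →
        truncInt W γ N a L ≤ T * ∫⁻ x in hcube a L, W x) → S ≤ T := by
      intro T hT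
      refine iSup₂_le fun a L => iSup_le fun hL => ?_
      exact ENNReal.div_le_of_le_mul (hT a L hL)
    have hSt : S ≠ ⊤ := by
      refine ne_top_of_le_ne_top (b := (N : ℝ≥0∞) ^ γ)
        (ENNReal.rpow_ne_top_of_nonneg hγ.le (by simp)) (hSle _ fun a L hL => ?_)
      rw [← lintegral_const_mul _ hW]
      refine lintegral_mono fun x => ?_
      gcongr
      exact min_le_right _ _
    have hfix : S ≤ 2 ^ γ + ρ * S := hSle _ fun a L hL =>
      truncInt_step hW hW0 hWt hs hC hA le_self_add hD0 hDt hγ.le hS a hL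
    have hSK : S ≤ K := by
      rw [hK, ENNReal.le_div_iff_mul_le (Or.inl h1ρ) (Or.inl (by finiteness)), mul_comm,
        ENNReal.sub_mul (fun _ _ => hSt), one_mul]
      exact tsub_le_iff_right.2 hfix
    intro a L hL
    exact (hS a L hL).trans (by gcongr)
  refine ⟨γ, hγ, K, hKt, fun a L hL => ?_⟩
  have hv0 := volume_hcube_ne_zero a hL
  have hvt := volume_hcube_ne_top a L
  obtain ⟨hI0, hIt⟩ := hIpos a L hL
  set I := ∫⁻ x in hcube a L, W x with hI
  set v := volume (hcube a L) with hv
  set m := I / v with hm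
  have hm0 : m ≠ 0 := ENNReal.div_ne_zero.2 ⟨hI0, hvt⟩
  have hmt : m ≠ ⊤ := ENNReal.div_ne_top hIt hv0
  -- Removing the truncation by monotone convergence.
  have hlim : ∫⁻ x in hcube a L, (W x / m) ^ γ * W x ≤ K * I := by
    have htend : Filter.Tendsto (fun N : ℕ => truncInt W γ N a L) Filter.atTop
        (nhds (∫⁻ x in hcube a L, (W x / m) ^ γ * W x)) := by
      refine lintegral_tendsto_of_tendsto_of_monotone (fun N => by fun_prop) ?_ ?_
      · refine Filter.Eventually.of_forall fun x N M hNM => ?_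
        dsimp only
        gcongr
      · filter_upwards [ae_restrict_of_ae hWt] with x hx
        have hq : W x / m ≠ ⊤ := ENNReal.div_ne_top hx hm0
        obtain ⟨M, hM⟩ := ENNReal.exists_nat_gt hq
        refine tendsto_const_nhds.congr' ?_
        filter_upwards [Filter.eventually_ge_atTop M] with N hN
        rw [min_eq_left]
        exact hM.le.trans (by exact_mod_cast hN)
    exact le_of_tendsto' htend fun N => hbound N a L hL
  have hpt : ∀ x, W x ^ (1 + γ) = m ^ γ * ((W x / m) ^ γ * W x) := by
    intro x
    rw [← mul_assoc, ← ENNReal.mul_rpow_of_nonneg _ _ hγ.le, ENNReal.mul_div_cancel hm0 hmt,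
      ENNReal.rpow_add_of_nonneg _ _ zero_le_one hγ.le, ENNReal.rpow_one, mul_comm]
  simp_rw [hpt]
  rw [lintegral_const_mul _ (by fun_prop)]
  have hmI : v⁻¹ * I = m := by rw [hm, ENNReal.div_eq_inv_mul]
  rw [hmI, ENNReal.rpow_add_of_nonneg _ _ zero_le_one hγ.le, ENNReal.rpow_one]
  calc v⁻¹ * (m ^ γ * ∫⁻ x in hcube a L, (W x / m) ^ γ * W x)
      ≤ v⁻¹ * (m ^ γ * (K * I)) := by gcongr
    _ = K * (v⁻¹ * I * m ^ γ) := by ring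
    _ = _ := by rw [hmI]

/-! ### Means over cubes in Euclidean space -/

/-- The normalized restriction of Lebesgue measure to the cube with center `c` and half edge-length
`r`, so that integrals against it are means over the cube. -/
noncomputable def cubeMean {n : ℕ} (c : EuclideanSpace ℝ (Fin n)) (r : ℝ) :
    Measure (EuclideanSpace ℝ (Fin n)) :=
  (volume (axisCube c r))⁻¹ • volume.restrict (axisCube c r)

lemma lintegral_cubeMean {n : ℕ} (c : EuclideanSpace ℝ (Fin n)) (r : ℝ)
    (f : EuclideanSpace ℝ (Fin n) → ℝ≥0∞) :
    ∫⁻ x, f x ∂(cubeMean c r) = (volume (axisCube c r))⁻¹ * ∫⁻ x in axisCube c r, f x := by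
  rw [cubeMean, lintegral_smul_measure, smul_eq_mul]

lemma ae_cubeMean {n : ℕ} (c : EuclideanSpace ℝ (Fin n)) (r : ℝ)
    {p : EuclideanSpace ℝ (Fin n) → Prop} (h : ∀ᵐ x, p x) : ∀ᵐ x ∂(cubeMean c r), p x :=
  Measure.ae_smul_measure (ae_restrict_of_ae h) _

lemma setLIntegral_axisCube {n : ℕ} (c : EuclideanSpace ℝ (Fin n)) {r : ℝ} (hr : 0 < r)
    (f : EuclideanSpace ℝ (Fin n) → ℝ≥0∞) :
    ∫⁻ x in axisCube c r, f x = ∫⁻ y in hcube (fun i => c i - r) (2 * r), f (WithLp.toLp 2 y) := by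
  rw [← (PiLp.volume_preserving_toLp (Fin n)).setLIntegral_comp_preimage_emb
    (MeasurableEquiv.toLp 2 (Fin n → ℝ)).measurableEmbedding f (axisCube c r)]
  have hset : WithLp.toLp 2 ⁻¹' axisCube c r
      = closedBall (fun i => c i - r + 2 * r / 2) (2 * r / 2) := by
    have e1 : ∀ i, c i - r + 2 * r / 2 = c i := fun i => by ring
    have e2 : 2 * r / 2 = r := by ring
    ext y
    rw [closedBall_pi _ (by positivity), Set.mem_univ_pi]
    refine forall_congr' fun i => ?_
    rw [mem_closedBall, Real.dist_eq, e1, e2]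
  rw [hset]
  exact setLIntegral_congr (hcube_ae_eq_closedBall _ (by positivity)).symm

lemma volume_axisCube {n : ℕ} (c : EuclideanSpace ℝ (Fin n)) {r : ℝ} (hr : 0 < r) :
    volume (axisCube c r) = volume (hcube (fun i => c i - r) (2 * r)) := by
  simpa only [setLIntegral_one] using setLIntegral_axisCube c hr (fun _ => 1)

lemma isProbabilityMeasure_cubeMean {n : ℕ} (c : EuclideanSpace ℝ (Fin n)) {r : ℝ} (hr : 0 < r) :
    IsProbabilityMeasure (cubeMean c r) := by
  constructor
  rw [cubeMean, Measure.smul_apply, Measure.restrict_apply_univ, volume_axisCube c hr, smul_eq_mul]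
  exact ENNReal.inv_mul_cancel (volume_hcube_ne_zero _ (by positivity)) (volume_hcube_ne_top _ _)

/-- The reverse Hölder inequality of `reverse_holder`, transferred to Euclidean space. -/
lemma reverse_holder_cubeMean {n : ℕ} {W : EuclideanSpace ℝ (Fin n) → ℝ≥0∞}
    (hW : Measurable W) (hW0 : ∀ᵐ x, W x ≠ 0) (hWt : ∀ᵐ x, W x ≠ ⊤) {s : ℝ} (hs : 0 < s)
    {C : ℝ≥0∞} (hC : C ≠ ⊤)
    (hA : ∀ (c : EuclideanSpace ℝ (Fin n)) (r : ℝ), 0 < r →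
      (∫⁻ x, W x ∂(cubeMean c r)) * (∫⁻ x, W x ^ (-(1 / s)) ∂(cubeMean c r)) ^ s ≤ C) :
    ∃ γ : ℝ, 0 < γ ∧ ∃ K : ℝ≥0∞, K ≠ ⊤ ∧ ∀ (c : EuclideanSpace ℝ (Fin n)) (r : ℝ), 0 < r →
      ∫⁻ x, W x ^ (1 + γ) ∂(cubeMean c r) ≤ K * (∫⁻ x, W x ∂(cubeMean c r)) ^ (1 + γ) := by
  have hmp := PiLp.volume_preserving_toLp (Fin n)
  have hA' : ∀ (a : Fin n → ℝ) (L : ℝ), 0 < L →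
      (∫⁻ x in hcube a L, W (WithLp.toLp 2 x)) *
        (∫⁻ x in hcube a L, W (WithLp.toLp 2 x) ^ (-(1 / s))) ^ s
        ≤ C * volume (hcube a L) ^ (s + 1) := by
    intro a L hL
    have h1 := hA (WithLp.toLp 2 fun i => a i + L / 2) (L / 2) (by positivity)
    simp only [lintegral_cubeMean, setLIntegral_axisCube _ (half_pos hL),
      volume_axisCube _ (half_pos hL)] at h1
    have e1 : (fun i => a i + L / 2 - L / 2) = a := by ext i; ring
    have e2 : 2 * (L / 2) = L := by ring
    rw [e1, e2, ENNReal.mul_rpow_of_nonneg _ _ hs.le] at h1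
    have hv0 := volume_hcube_ne_zero a hL
    have hvt := volume_hcube_ne_top a L
    set v := volume (hcube a L)
    have hvs : v ^ s * v⁻¹ ^ s = 1 := by
      rw [← ENNReal.mul_rpow_of_nonneg _ _ hs.le, ENNReal.mul_inv_cancel hv0 hvt,
        ENNReal.one_rpow]
    rw [ENNReal.rpow_add _ _ hv0 hvt, ENNReal.rpow_one]
    calc _ = (v * v⁻¹) * (v ^ s * v⁻¹ ^ s) * ((∫⁻ x in hcube a L, W (WithLp.toLp 2 x)) *
          (∫⁻ x in hcube a L, W (WithLp.toLp 2 x) ^ (-(1 / s))) ^ s) := by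
          rw [hvs, ENNReal.mul_inv_cancel hv0 hvt, one_mul, one_mul]
      _ = (v⁻¹ * (∫⁻ x in hcube a L, W (WithLp.toLp 2 x)) * (v⁻¹ ^ s *
          (∫⁻ x in hcube a L, W (WithLp.toLp 2 x) ^ (-(1 / s))) ^ s)) * (v ^ s * v) := by ring
      _ ≤ C * (v ^ s * v) := by gcongr
  obtain ⟨γ, hγ, K, hK, h⟩ := reverse_holder (W := fun y => W (WithLp.toLp 2 y))
    (hW.comp hmp.measurable) (hmp.quasiMeasurePreserving.ae hW0)
    (hmp.quasiMeasurePreserving.ae hWt) hs hC hA'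
  refine ⟨γ, hγ, K, hK, fun c r hr => ?_⟩
  simp only [lintegral_cubeMean, setLIntegral_axisCube c hr, volume_axisCube c hr]
  exact h _ _ (by positivity)

/-! ### Combining the weights -/

/-- Hölder's inequality on a probability space, the missing exponent `1 - p - q` being assigned to
the constant `1`. -/
lemma lintegral_rpow_mul_rpow_le {X : Type*} [MeasurableSpace X] {μ : Measure X}
    [IsProbabilityMeasure μ] {F G : X → ℝ≥0∞} (hF : Measurable F) (hG : Measurable G)
    {p q : ℝ} (hp : 0 ≤ p) (hq : 0 ≤ q) (hpq : p + q ≤ 1) :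
    ∫⁻ x, F x ^ p * G x ^ q ∂μ ≤ (∫⁻ x, F x ∂μ) ^ p * (∫⁻ x, G x ∂μ) ^ q := by
  have := ENNReal.lintegral_prod_norm_pow_le (μ := μ) Finset.univ
    (f := ![F, G, fun _ => 1]) (p := ![p, q, 1 - p - q])
    (by
      intro i _
      fin_cases i
      · exact hF.aemeasurable
      · exact hG.aemeasurable
      · exact aemeasurable_const)
    (by simp [Fin.sum_univ_three])
    (by
      intro i _
      fin_cases i
      · exact hp
      · exact hq
      · simp; linarith)
  simpa [Fin.prod_univ_three] using this

/-- Under a reverse Hölder inequality for `F`, Hölder's inequality retains the sharp power of the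
mean of `F` even when `p ≥ 1`. -/
lemma lintegral_rpow_mul_rpow_le_of_reverse {X : Type*} [MeasurableSpace X] {μ : Measure X}
    [IsProbabilityMeasure μ] {F G : X → ℝ≥0∞} (hF : Measurable F) (hG : Measurable G)
    {γ : ℝ} (hγ : 0 < γ) {K : ℝ≥0∞}
    (hK : ∫⁻ x, F x ^ (1 + γ) ∂μ ≤ K * (∫⁻ x, F x ∂μ) ^ (1 + γ))
    {p q : ℝ} (hp : 0 ≤ p) (hq : 0 ≤ q) (hpq : p / (1 + γ) + q ≤ 1) :
    ∫⁻ x, F x ^ p * G x ^ q ∂μ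
      ≤ K ^ (p / (1 + γ)) * ((∫⁻ x, F x ∂μ) ^ p * (∫⁻ x, G x ∂μ) ^ q) := by
  have hmul : (1 + γ) * (p / (1 + γ)) = p := by field_simp
  have hp' : 0 ≤ p / (1 + γ) := by positivity
  have h := lintegral_rpow_mul_rpow_le (μ := μ) (hF.pow_const (1 + γ)) hG hp' hq hpq
  simp only [← ENNReal.rpow_mul, hmul] at h
  calc _ ≤ _ := h
    _ ≤ (K * (∫⁻ x, F x ∂μ) ^ (1 + γ)) ^ (p / (1 + γ)) * (∫⁻ x, G x ∂μ) ^ q := by gcongr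
    _ = _ := by
      rw [ENNReal.mul_rpow_of_nonneg _ _ hp', ← ENNReal.rpow_mul, hmul, mul_assoc]

/-- All exponents required by the two applications of Hölder's inequality are admissible for
small `ε`. -/
lemma exists_small_exponent_s8 {s δ γ γ' : ℝ} (hs : 0 < s) (hδ : 0 < δ) (hγ : 0 < γ) (hγ' : 0 < γ') :
    ∃ ε : ℝ, 0 < ε ∧ ε < δ ∧ ε < s ∧ 1 / (1 + γ) + ε / δ ≤ 1 ∧
      s / (s - ε) / (1 + γ') + ε / δ * (s / (s - ε)) ≤ 1 := by
  have h1 : ContinuousAt (fun ε : ℝ => 1 / (1 + γ) + ε / δ) 0 := by fun_prop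
  have h2 : ContinuousAt (fun ε : ℝ => s / (s - ε) / (1 + γ') + ε / δ * (s / (s - ε))) 0 := by
    have : s - 0 ≠ 0 := by simpa using hs.ne'
    fun_prop (disch := assumption)
  have l1 : 1 / (1 + γ) + 0 / δ < 1 := by
    rw [zero_div, add_zero, div_lt_one (by positivity)]; linarith
  have l2 : s / (s - 0) / (1 + γ') + 0 / δ * (s / (s - 0)) < 1 := by
    rw [sub_zero, div_self hs.ne', zero_div, zero_mul, add_zero, div_lt_one (by positivity)]
    linarith
  have hev := ((h1.eventually_lt_const l1).and ((h2.eventually_lt_const l2).and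
    ((eventually_lt_nhds hδ).and (eventually_lt_nhds hs)))).filter_mono
      (nhdsWithin_le_nhds (s := Ioi (0 : ℝ))) |>.and self_mem_nhdsWithin
  obtain ⟨ε, ⟨e1, e2, e3, e4⟩, e0⟩ := hev.exists
  exact ⟨ε, e0, e3, e4, e1.le, e2.le⟩

/-- if `1 < q < ∞`, `w ∈ A_q(ℝⁿ)` and `a^δ ∈ A_q(ℝⁿ)` for some
`0 < δ < q − 1`, then there is `0 < ε < δ` with `w·a^ε ∈ A_{q−ε}(ℝⁿ)`. -/
theorem muckenhoupt_grandisator_lemma {n : ℕ} (q : ℝ) (hq : 1 < q)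
    (w a : EuclideanSpace ℝ (Fin n) → ℝ)
    (hw_meas : Measurable w) (hw_pos : ∀ᵐ x ∂volume, 0 < w x)
    (ha_meas : Measurable a) (ha_pos : ∀ᵐ x ∂volume, 0 < a x)
    (δ : ℝ) (hδ0 : 0 < δ) (hδq : δ < q - 1)
    (hw : MemAq q w) (ha : MemAq q (fun x => a x ^ δ)) :
    ∃ ε : ℝ, 0 < ε ∧ ε < δ ∧ MemAq (q - ε) (fun x => w x * a x ^ ε) := by
  obtain ⟨s, rfl⟩ : ∃ s, q = s + 1 := ⟨q - 1, by ring⟩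
  have hs : 0 < s := by linarith
  obtain ⟨Cw, hCw, hw⟩ := hw
  obtain ⟨Ca, hCa, ha⟩ := ha
  simp only [add_sub_cancel_right, ← lintegral_cubeMean] at hw ha
  set W : EuclideanSpace ℝ (Fin n) → ℝ≥0∞ := fun x => ENNReal.ofReal (w x) with hWdef
  have hW : Measurable W := hw_meas.ennreal_ofReal
  have hW0 : ∀ᵐ x, W x ≠ 0 := by
    filter_upwards [hw_pos] with x hx
    simpa [hWdef] using hx
  have hWt : ∀ᵐ x, W x ≠ ⊤ := Filter.Eventually.of_forall fun x => ENNReal.ofReal_ne_top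
  set V : EuclideanSpace ℝ (Fin n) → ℝ≥0∞ := fun x => W x ^ (-(1 / s)) with hVdef
  have hV : Measurable V := hW.pow_const _
  have hV0 : ∀ᵐ x, V x ≠ 0 := by
    filter_upwards [hW0, hWt] with x h0 ht
    simp [hVdef, h0, ht]
  have hVt : ∀ᵐ x, V x ≠ ⊤ := by
    filter_upwards [hW0, hWt] with x h0 ht
    simp [hVdef, h0, ht]
  have hVw : ∀ᵐ x, ENNReal.ofReal (w x ^ (-(1 / s))) = V x := by
    filter_upwards [hw_pos] with x hx
    simp only [hVdef, hWdef, ENNReal.ofReal_rpow_of_pos hx]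
  have hw' : ∀ (c : EuclideanSpace ℝ (Fin n)) (r : ℝ), 0 < r →
      (∫⁻ x, W x ∂(cubeMean c r)) * (∫⁻ x, V x ∂(cubeMean c r)) ^ s ≤ Cw := by
    intro c r hr
    rw [← lintegral_congr_ae (ae_cubeMean c r hVw)]
    exact hw c r hr
  obtain ⟨γ, hγ, K, hK, hRH⟩ := reverse_holder_cubeMean hW hW0 hWt hs hCw hw'
  -- The dual weight `V` satisfies the Muckenhoupt condition with `1 / s` in place of `s`.
  obtain ⟨γ', hγ', K', hK', hRH'⟩ := reverse_holder_cubeMean hV hV0 hVt (s := 1 / s)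
    (C := Cw ^ (1 / s)) (by positivity) (ENNReal.rpow_ne_top_of_nonneg (by positivity) hCw) (by
      intro c r hr
      have hVW : ∀ x, V x ^ (-(1 / (1 / s))) = W x := by
        intro x
        rw [hVdef, ← ENNReal.rpow_mul]
        have : -(1 / s) * -(1 / (1 / s)) = 1 := by field_simp
        rw [this, ENNReal.rpow_one]
      simp_rw [hVW]
      have := ENNReal.rpow_le_rpow (hw' c r hr) (by positivity : 0 ≤ 1 / s)
      rwa [ENNReal.mul_rpow_of_nonneg _ _ (by positivity), ← ENNReal.rpow_mul,
        mul_one_div_cancel hs.ne', ENNReal.rpow_one, mul_comm] at this)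
  obtain ⟨ε, hε0, hεδ, hεs, hexp, hexp'⟩ := exists_small_exponent_s8 hs hδ0 hγ hγ'
  refine ⟨ε, hε0, hεδ, ?_⟩
  have hsε : 0 < s - ε := by linarith
  set u := s / (s - ε) with hu
  set e := ε / δ with he
  have hu0 : 0 ≤ u := by positivity
  have he0 : 0 ≤ e := by positivity
  set A : EuclideanSpace ℝ (Fin n) → ℝ≥0∞ := fun x => ENNReal.ofReal (a x ^ δ) with hAdef
  set B : EuclideanSpace ℝ (Fin n) → ℝ≥0∞ :=
    fun x => ENNReal.ofReal ((a x ^ δ) ^ (-(1 / s))) with hBdef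
  have hA : Measurable A := (ha_meas.pow_const _).ennreal_ofReal
  have hB : Measurable B := ((ha_meas.pow_const _).pow_const _).ennreal_ofReal
  have hnum : ∀ᵐ x, ENNReal.ofReal (w x * a x ^ ε) = W x ^ (1 : ℝ) * A x ^ e := by
    filter_upwards [hw_pos, ha_pos] with x hwx hax
    have h1 : δ * e = ε := by rw [he]; field_simp
    rw [ENNReal.rpow_one, ENNReal.ofReal_mul hwx.le, hAdef,
      ENNReal.ofReal_rpow_of_pos (by positivity), ← Real.rpow_mul hax.le, h1]
  have hden : ∀ᵐ x, ENNReal.ofReal ((w x * a x ^ ε) ^ (-(1 / (s - ε))))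
      = V x ^ u * B x ^ (e * u) := by
    filter_upwards [hw_pos, ha_pos, hVw] with x hwx hax hVx
    have h1 : -(1 / s) * u = -(1 / (s - ε)) := by rw [hu]; field_simp
    have h2 : δ * -(1 / s) * (e * u) = ε * -(1 / (s - ε)) := by
      rw [hu, he]; field_simp
    rw [← hVx, hBdef, ENNReal.ofReal_rpow_of_pos (by positivity),
      ENNReal.ofReal_rpow_of_pos (by positivity), ← ENNReal.ofReal_mul (by positivity),
      Real.mul_rpow hwx.le (by positivity), ← Real.rpow_mul hwx.le, ← Real.rpow_mul hax.le,
      ← Real.rpow_mul hax.le, ← Real.rpow_mul hax.le, h1, h2]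
  refine ⟨K ^ (1 / (1 + γ)) * (K' ^ (u / (1 + γ'))) ^ (s - ε) * (Cw * Ca ^ e), ?_, ?_⟩
  · refine ENNReal.mul_ne_top (ENNReal.mul_ne_top ?_ ?_) (ENNReal.mul_ne_top hCw ?_)
    · exact ENNReal.rpow_ne_top_of_nonneg (by positivity) hK
    · exact ENNReal.rpow_ne_top_of_nonneg hsε.le
        (ENNReal.rpow_ne_top_of_nonneg (by positivity) hK')
    · exact ENNReal.rpow_ne_top_of_nonneg he0 hCa
  · intro c r hr
    have hprob := isProbabilityMeasure_cubeMean c hr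
    rw [show s + 1 - ε - 1 = s - ε by ring, ← lintegral_cubeMean, ← lintegral_cubeMean,
      lintegral_congr_ae (ae_cubeMean c r hnum), lintegral_congr_ae (ae_cubeMean c r hden)]
    have b1 := lintegral_rpow_mul_rpow_le_of_reverse (μ := cubeMean c r) hW hA hγ (hRH c r hr)
      zero_le_one he0 hexp
    have b2 := lintegral_rpow_mul_rpow_le_of_reverse (μ := cubeMean c r) hV hB hγ' (hRH' c r hr)
      hu0 (mul_nonneg he0 hu0) hexp'
    have c1 := hw' c r hr
    have c2 := ha c r hr
    rw [ENNReal.rpow_one] at b1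
    set iW := ∫⁻ x, W x ∂(cubeMean c r)
    set iV := ∫⁻ x, V x ∂(cubeMean c r)
    set iA := ∫⁻ x, A x ∂(cubeMean c r)
    set iB := ∫⁻ x, B x ∂(cubeMean c r)
    have hus : u * (s - ε) = s := by rw [hu]; field_simp
    have heus : e * u * (s - ε) = s * e := by rw [mul_assoc, hus, mul_comm]
    calc _ ≤ (K ^ (1 / (1 + γ)) * (iW * iA ^ e)) *
          (K' ^ (u / (1 + γ')) * (iV ^ u * iB ^ (e * u))) ^ (s - ε) := by gcongr
      _ = (K ^ (1 / (1 + γ)) * (iW * iA ^ e)) *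
          ((K' ^ (u / (1 + γ'))) ^ (s - ε) * (iV ^ s * (iB ^ s) ^ e)) := by
        rw [ENNReal.mul_rpow_of_nonneg _ _ hsε.le, ENNReal.mul_rpow_of_nonneg _ _ hsε.le,
          ← ENNReal.rpow_mul iV, hus, ← ENNReal.rpow_mul iB, heus, ENNReal.rpow_mul iB]
      _ = K ^ (1 / (1 + γ)) * (K' ^ (u / (1 + γ'))) ^ (s - ε) *
          ((iW * iV ^ s) * (iA * iB ^ s) ^ e) := by
        rw [ENNReal.mul_rpow_of_nonneg _ _ he0]; ring
      _ ≤ _ := by gcongr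
end
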